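/- arXiv:2207.09552 — 4 statements merged into one kernel-verified Lean document; each statement's English description precedes it below -/
import Mathlib

section
/- For every convex body K in ℝ³, the smallest possible density of a non-separable lattice of translates of K satisfies d_{3,2}(K) ≤ π/(4√3). -/
open MeasureTheory Set Matrix Pointwise

noncomputable section

/-- The lattice `A · ℤⁿ` associated with an (invertible) matrix `A`. -/
def latticeOf {n : ℕ} (A : Matrix (Fin n) (Fin n) ℝ) : Set (Fin n → ℝ) :=
  Set.range fun m : Fin n → ℤ => A.mulVec fun i => (m i : ℝ)

/-- `Λ + K` is non-separable: every affine hyperplane `{y | ⟨u,y⟩ = c}` (with `u ≠ 0`)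
meets `x + K` for some `x ∈ Λ`. -/
def NonSeparable {n : ℕ} (Λ K : Set (Fin n → ℝ)) : Prop :=
  ∀ u : Fin n → ℝ, u ≠ 0 → ∀ c : ℝ, ∃ x ∈ Λ, ∃ y ∈ K, u ⬝ᵥ (x + y) = c

/-- `d_{n,n-1}(K)`: the smallest density `|K|/d(Λ)` of a non-separable
lattice of translates of `K`. -/
def dTrans {n : ℕ} (K : Set (Fin n → ℝ)) : ℝ :=
  sInf {d : ℝ | ∃ A : Matrix (Fin n) (Fin n) ℝ, A.det ≠ 0 ∧
    NonSeparable (latticeOf A) K ∧ d = (volume K).toReal / |A.det|}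

/-!
Over `p, q, r, z ∈ K - K`, consider the largest value `D` of `det (p - r, q - r, z)`. Moving the
eight underlying points of `K` along parallel lines changes this determinant linearly, so a Steiner
symmetrization of `K` does not increase `D`. Hence `D` is at least its value for a ball of the same
volume, where a regular triangle and an orthogonal segment give `9√3/π · |K|`.

From an optimal `p, q, r, z` one obtains a non-separable lattice of determinant at least `4/9 · D`.
Either two of `p, q, r` together with `z` span such a lattice, or, projecting along `z`, the points
`±p, ±q, ±r` lie on the sides of a hexagon `±a, ±b, ±(a - b)`, and `a, b, z` span one; the
comparison of `det (a, b, z)` with `D` is Schur's inequality.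
-/

section MeasureTheory

lemma exists_measure_inter_preimage_add_ne_zero {G : Type*} [AddGroup G] [MeasurableSpace G]
    [MeasurableAdd₂ G] {μ : Measure G} [SFinite μ] [μ.IsAddRightInvariant] {A D : Set G}
    (hA : MeasurableSet A) (hD : MeasurableSet D) (hA₀ : μ A ≠ 0) (hD₀ : μ D ≠ 0) :
    ∃ v, μ (D ∩ (v + ·) ⁻¹' A) ≠ 0 := by
  by_contra! hnull
  have hpres := (measurePreserving_add_prod μ μ).measure_preimage (hA.prod hD).nullMeasurableSet
  rw [Measure.prod_prod, (Measure.measure_prod_null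
    ((measurePreserving_add_prod μ μ).measurable (hA.prod hD))).2] at hpres
  · exact mul_ne_zero hA₀ hD₀ hpres.symm
  · refine .of_forall fun v => ?_
    rw [Pi.zero_apply, ← hnull v, inter_comm]
    rfl

variable {α : Type*} [MeasurableSpace α] {μ : Measure α} {A B S : Set α}

lemma measure_inter_le_of_nested (hAS : μ S = μ A) (hSB : S ⊆ B ∨ B ⊆ S) :
    μ (A ∩ B) ≤ μ (S ∩ B) := by
  rcases hSB with hSB | hBS
  · rw [inter_eq_left.2 hSB, hAS]
    exact measure_mono inter_subset_left
  · rw [inter_eq_right.2 hBS]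
    exact measure_mono inter_subset_right

lemma measure_inter_lt_left (hB : MeasurableSet B) (hfin : μ (A ∩ B) ≠ ⊤) (hAB : μ (A \ B) ≠ 0) :
    μ (A ∩ B) < μ A := by
  rw [← measure_inter_add_sdiff A hB]
  exact ENNReal.lt_add_right hfin hAB

lemma measure_inter_lt_of_nested (hA : MeasurableSet A) (hB : MeasurableSet B)
    (hAS : μ S = μ A) (hSB : S ⊆ B ∨ B ⊆ S) (hfin : μ (A ∩ B) ≠ ⊤)
    (hAB : μ (A \ B) ≠ 0) (hBA : μ (B \ A) ≠ 0) : μ (A ∩ B) < μ (S ∩ B) := by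
  rcases hSB with hSB | hBS
  · rw [inter_eq_left.2 hSB, hAS]
    exact measure_inter_lt_left hB hfin hAB
  · rw [inter_eq_right.2 hBS, inter_comm]
    exact measure_inter_lt_left hA (by rwa [inter_comm]) hBA

end MeasureTheory

section NonemptyCompacts

open TopologicalSpace

variable {X : Type*} [TopologicalSpace X]

lemma upperSemicontinuous_measure_nonemptyCompacts [MeasurableSpace X] (μ : Measure X)
    [μ.OuterRegular] : UpperSemicontinuous fun C : NonemptyCompacts X => μ (C : Set X) := by
  intro C m hm
  obtain ⟨U, hCU, hU, hUm⟩ := (C : Set X).exists_isOpen_lt_of_lt m hm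
  filter_upwards [(NonemptyCompacts.isOpen_subsets_of_isOpen hU).mem_nhds hCU] with D hDU
  exact (measure_mono hDU).trans_lt hUm

lemma isClosed_setOf_univ_pi_subset {ι : Type*} [Finite ι] {T : Set (ι → X)} (hT : IsClosed T) :
    IsClosed {C : NonemptyCompacts X | univ.pi (fun _ => (C : Set X)) ⊆ T} := by
  refine isOpen_compl_iff.1 (isOpen_iff_mem_nhds.2 fun C hC => ?_)
  obtain ⟨w, hwC, hwT⟩ := not_subset.1 hC
  obtain ⟨U, hU, hUT⟩ := isOpen_pi_iff'.1 hT.isOpen_compl w hwT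
  have hmeet : ∀ i, ∀ᶠ D : NonemptyCompacts X in nhds C, ((D : Set X) ∩ U i).Nonempty := fun i =>
    (NonemptyCompacts.isOpen_inter_nonempty_of_isOpen (hU i).1).mem_nhds
      ⟨w i, hwC i (mem_univ i), (hU i).2⟩
  filter_upwards [Filter.eventually_all.2 hmeet] with D hD hDT
  choose y hy using hD
  exact hUT (fun i _ => (hy i).2) (hDT fun i _ => (hy i).1)

end NonemptyCompacts

section Steiner

open Metric

open scoped RealInnerProductSpace

variable {E : Type*} [NormedAddCommGroup E] [InnerProductSpace ℝ E] {v p : E} {A : Set E}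

/-- The section of `A` by the line through `p` in direction `v`, as a set of parameters. -/
def lineSlice (v : E) (A : Set E) (p : E) : Set ℝ := {t | p + t • v ∈ A}

lemma isCompact_lineSlice (hA : IsCompact A) (hv : v ≠ 0) (p : E) : IsCompact (lineSlice v A p) :=
  ((Homeomorph.addLeft p).isClosedEmbedding.comp
    (isClosedEmbedding_smul_left hv)).isCompact_preimage hA

lemma lineSlice_add_smul (v : E) (A : Set E) (p : E) (s : ℝ) :
    lineSlice v A (p + s • v) = (s + ·) ⁻¹' lineSlice v A p := by
  ext t
  simp only [lineSlice, Set.mem_ofPred_eq, mem_preimage, add_smul, add_assoc]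

lemma norm_add_smul_le_norm_add_smul_iff (hv : ‖v‖ = 1) (p : E) (s t : ℝ) :
    ‖p + s • v‖ ≤ ‖p + t • v‖ ↔ |⟪v, p⟫ + s| ≤ |⟪v, p⟫ + t| := by
  have norm_sq_eq (s : ℝ) : ‖p + s • v‖ ^ 2 = ‖p‖ ^ 2 - ⟪v, p⟫ ^ 2 + (⟪v, p⟫ + s) ^ 2 := by
    rw [norm_add_sq_real, norm_smul, hv, real_inner_smul_right, real_inner_comm, mul_one,
      Real.norm_eq_abs, sq_abs]
    ring
  rw [← sq_le_sq₀ (norm_nonneg _) (norm_nonneg _), norm_sq_eq, norm_sq_eq, add_le_add_iff_left,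
    sq_le_sq]

/-- The Steiner symmetral of `A` in the unit direction `v`, with open chords centred on `vᗮ`. A
chord of infinite length is replaced by the empty set. -/
def steinerSymmetral (v : E) (A : Set E) : Set E :=
  {x | 2 * |⟪v, x⟫| < volume.real (lineSlice v A x)}

lemma lineSlice_steinerSymmetral (hv : ‖v‖ = 1) (A : Set E) (p : E) :
    lineSlice v (steinerSymmetral v A) p = ball (-⟪v, p⟫) (volume.real (lineSlice v A p) / 2) := by
  ext t
  have hvol : volume.real (lineSlice v A (p + t • v)) = volume.real (lineSlice v A p) := by
    rw [lineSlice_add_smul, measureReal_def, measure_preimage_add, measureReal_def]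
  have hinner : ⟪v, p + t • v⟫ = ⟪v, p⟫ + t := by
    rw [inner_add_right, real_inner_smul_right, real_inner_self_eq_norm_sq, hv, one_pow, mul_one]
  change 2 * |⟪v, p + t • v⟫| < volume.real (lineSlice v A (p + t • v)) ↔ _
  rw [hvol, hinner, mem_ball, Real.dist_eq, sub_neg_eq_add, add_comm t, lt_div_iff₀' two_pos]

lemma volume_lineSlice_steinerSymmetral (hv : ‖v‖ = 1) (hA : IsCompact A) (p : E) :
    volume (lineSlice v (steinerSymmetral v A) p) = volume (lineSlice v A p) := by
  have hfin := (isCompact_lineSlice hA (norm_ne_zero_iff.1 (hv ▸ one_ne_zero)) p).measure_ne_top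
    (μ := volume)
  rw [lineSlice_steinerSymmetral hv, Real.volume_ball, mul_div_cancel₀ _ two_ne_zero,
    ofReal_measureReal hfin]

lemma lineSlice_steinerSymmetral_nested_closedBall (hv : ‖v‖ = 1) (A : Set E) (r : ℝ) (p : E) :
    lineSlice v (steinerSymmetral v A) p ⊆ lineSlice v (closedBall 0 r) p ∨
      lineSlice v (closedBall 0 r) p ⊆ lineSlice v (steinerSymmetral v A) p := by
  rw [or_iff_not_imp_left, not_subset, lineSlice_steinerSymmetral hv]
  rintro ⟨t, ht, htr⟩ s hs
  have hnorm : ‖p + s • v‖ < ‖p + t • v‖ :=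
    (mem_closedBall_zero_iff.1 hs).trans_lt (not_le.1 fun h => htr (mem_closedBall_zero_iff.2 h))
  have habs := lt_iff_lt_of_le_iff_le (norm_add_smul_le_norm_add_smul_iff hv p t s) |>.1 hnorm
  rw [mem_ball, Real.dist_eq, sub_neg_eq_add, add_comm] at ht ⊢
  exact habs.trans ht

lemma steinerSymmetral_subset_closedBall (hv : ‖v‖ = 1) {R : ℝ} (hA : A ⊆ closedBall 0 R) :
    steinerSymmetral v A ⊆ closedBall 0 R := by
  intro x hx
  by_contra hxR
  have hsub : lineSlice v A x ⊆ closedBall (-⟪v, x⟫) |⟪v, x⟫| := by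
    intro t ht
    have hnorm : ‖x + t • v‖ ≤ ‖x + (0 : ℝ) • v‖ := by
      rw [zero_smul, add_zero]
      exact (mem_closedBall_zero_iff.1 (hA ht)).trans
        (not_le.1 fun h => hxR (mem_closedBall_zero_iff.2 h)).le
    have habs := (norm_add_smul_le_norm_add_smul_iff hv x t 0).1 hnorm
    rw [add_zero] at habs
    rwa [mem_closedBall, Real.dist_eq, sub_neg_eq_add, add_comm]
  have hvol := measureReal_mono (μ := volume) hsub measure_closedBall_lt_top.ne
  rw [Real.volume_real_closedBall (abs_nonneg _)] at hvol
  exact hvol.not_gt hx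

lemma exists_chord_of_mem_steinerSymmetral (hA : IsCompact A) (hv : v ≠ 0) {x : E}
    (hx : x ∈ steinerSymmetral v A) :
    ∃ a b : ℝ, x + a • v ∈ A ∧ x + b • v ∈ A ∧ 2 * |⟪v, x⟫| ≤ b - a := by
  have hcpt := isCompact_lineSlice hA hv x
  have hne : (lineSlice v A x).Nonempty := by
    by_contra! hempty
    change 2 * |⟪v, x⟫| < volume.real (lineSlice v A x) at hx
    rw [hempty, measureReal_empty] at hx
    linarith [abs_nonneg ⟪v, x⟫]
  refine ⟨_, _, hcpt.sInf_mem hne, hcpt.sSup_mem hne, hx.le.trans ?_⟩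
  rw [← Real.diam_eq hcpt.isBounded]
  exact ENNReal.toReal_mono hcpt.isBounded.ediam_ne_top (Real.volume_le_diam _)

variable [MeasurableSpace E] [BorelSpace E]

lemma measurableSet_lineSlice (hA : MeasurableSet A) (v p : E) : MeasurableSet (lineSlice v A p) :=
  (continuous_const.add (continuous_id.smul continuous_const)).measurable hA

lemma measurable_volume_lineSlice (hA : MeasurableSet A) (v : E) :
    Measurable fun p : E => volume (lineSlice v A p) := by
  have hmeas : Measurable fun x : E × ℝ => x.1 + x.2 • v :=
    (continuous_fst.add (continuous_snd.smul continuous_const)).measurable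
  exact measurable_measure_prodMk_left (hmeas hA)

lemma measurableSet_steinerSymmetral (hA : MeasurableSet A) (v : E) :
    MeasurableSet (steinerSymmetral v A) :=
  measurableSet_lt ((continuous_const.inner continuous_id).abs.const_mul 2).measurable
    (measurable_volume_lineSlice hA v).ennreal_toReal

variable [FiniteDimensional ℝ E]

lemma volume_eq_lintegral_volume_lineSlice (hv : ‖v‖ = 1) (hA : MeasurableSet A) :
    volume A = ∫⁻ p : (ℝ ∙ v)ᗮ, volume (lineSlice v A p) := by
  let decomp : WithLp 2 ((ℝ ∙ v) × (ℝ ∙ v)ᗮ) ≃ₗᵢ[ℝ] E := (ℝ ∙ v).orthogonalDecomposition.symm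
  have hpres : MeasurePreserving
      fun x : ℝ × (ℝ ∙ v)ᗮ =>
        decomp (WithLp.toLp 2 (LinearIsometryEquiv.toSpanUnitSingleton v hv x.1, x.2)) :=
    decomp.measurePreserving.comp ((WithLp.volume_preserving_toLp _ _).comp
      ((LinearIsometryEquiv.toSpanUnitSingleton v hv).measurePreserving.prod (.id volume)))
  rw [← hpres.measure_preimage hA.nullMeasurableSet,
    Measure.volume_eq_prod, Measure.prod_apply_symm (hpres.measurable hA)]
  congr! 3
  ext t
  simp [decomp, lineSlice, add_comm]

lemma volume_steinerSymmetral (hv : ‖v‖ = 1) (hA : IsCompact A) :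
    volume (steinerSymmetral v A) = volume A := by
  rw [volume_eq_lintegral_volume_lineSlice hv (measurableSet_steinerSymmetral hA.measurableSet v),
    volume_eq_lintegral_volume_lineSlice hv hA.measurableSet]
  simp only [volume_lineSlice_steinerSymmetral hv hA]

lemma volume_inter_closedBall_lt_steinerSymmetral (hv : ‖v‖ = 1) (hA : IsCompact A) {r s : ℝ}
    (hmoved : volume ((A \ closedBall 0 r) ∩ (s • v + ·) ⁻¹' (closedBall 0 r \ A)) ≠ 0) :
    volume (A ∩ closedBall 0 r) < volume (steinerSymmetral v A ∩ closedBall 0 r) := by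
  set B : Set E := closedBall 0 r
  set D := (A \ B) ∩ (s • v + ·) ⁻¹' (B \ A)
  have mA := hA.measurableSet
  have mB : MeasurableSet B := measurableSet_closedBall
  have mD : MeasurableSet D := (mA.diff mB).inter (measurable_const_add _ (mB.diff mA))
  have mS := (measurableSet_steinerSymmetral mA v).inter mB
  have hchord (p : E) := volume_lineSlice_steinerSymmetral hv hA p
  have hnested (p : E) := lineSlice_steinerSymmetral_nested_closedBall hv A r p
  have hlt (p : E) (hp : volume (lineSlice v D p) ≠ 0) :
      volume (lineSlice v (A ∩ B) p) < volume (lineSlice v (steinerSymmetral v A ∩ B) p) := by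
    refine measure_inter_lt_of_nested (measurableSet_lineSlice mA v p)
      (measurableSet_lineSlice mB v p) (hchord p) (hnested p) ?_ ?_ ?_
    · exact measure_ne_top_of_subset inter_subset_left
        (isCompact_lineSlice hA (norm_ne_zero_iff.1 (hv ▸ one_ne_zero)) p).measure_ne_top
    · exact fun hnull => hp (measure_mono_null (fun t ht => ht.1) hnull)
    · refine fun hnull => hp (measure_mono_null (fun t ht => ?_)
        ((measure_preimage_add volume s _).trans hnull))
      have hmem : s • v + (p + t • v) ∈ B \ A := ht.2
      rwa [add_left_comm, ← add_smul] at hmem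
  rw [volume_eq_lintegral_volume_lineSlice hv (mA.inter mB),
    volume_eq_lintegral_volume_lineSlice hv mS]
  refine lintegral_strict_mono_of_ae_le_of_ae_lt_on
    (s := {p : (ℝ ∙ v)ᗮ | volume (lineSlice v D p) ≠ 0})
    ((measurable_volume_lineSlice mS v).comp measurable_subtype_coe).aemeasurable ?_
    (.of_forall fun p => measure_inter_le_of_nested (hchord p) (hnested p)) ?_
    (.of_forall fun p => hlt p)
  · rw [← volume_eq_lintegral_volume_lineSlice hv (mA.inter mB)]
    exact measure_ne_top_of_subset inter_subset_left hA.measure_ne_top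
  · rw [volume_eq_lintegral_volume_lineSlice hv mD] at hmoved
    exact fun hnull => hmoved (lintegral_eq_zero_of_ae_eq_zero hnull)

end Steiner

section Symmetrization

open Metric TopologicalSpace

open scoped RealInnerProductSpace

variable {E ι : Type*}

/-- `|F| ≤ g` at all tuples of points of `C`, the property that the symmetrization of `C` has to
preserve. -/
def AbsBoundedOn (F : (ι → E) → ℝ) (g : ℝ) (C : Set E) : Prop :=
  univ.pi (fun _ => C) ⊆ {w | |F w| ≤ g}

lemma AbsBoundedOn.mono {F : (ι → E) → ℝ} {g : ℝ} {C D : Set E} (hD : AbsBoundedOn F g D)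
    (hCD : C ⊆ D) : AbsBoundedOn F g C :=
  (pi_mono fun _ _ => hCD).trans hD

lemma isClosed_setOf_abs_le [TopologicalSpace E] {F : (ι → E) → ℝ} (hF : Continuous F) (g : ℝ) :
    IsClosed {w | |F w| ≤ g} :=
  isClosed_le hF.abs continuous_const

lemma AbsBoundedOn.closure [TopologicalSpace E] {F : (ι → E) → ℝ} (hF : Continuous F) {g : ℝ}
    {C : Set E} (hC : AbsBoundedOn F g C) : AbsBoundedOn F g (closure C) := by
  rw [AbsBoundedOn, ← closure_pi_set]
  exact closure_minimal hC (isClosed_setOf_abs_le hF g)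

lemma abs_linearMap_le_of_abs_le_at_vertices [Finite ι] (ℓ : (ι → ℝ) →ₗ[ℝ] ℝ) {a b c : ι → ℝ}
    {g : ℝ} (hc : ∀ i, 2 * |c i| ≤ b i - a i)
    (hℓ : ∀ s : ι → ℝ, (∀ i, s i = a i ∨ s i = b i) → |ℓ s| ≤ g) : |ℓ c| ≤ g := by
  classical
  cases nonempty_fintype ι
  let d (i : ι) : ℝ := ℓ fun j => if i = j then 1 else 0
  have hsum (s : ι → ℝ) : ℓ s = ∑ i, s i * d i := ℓ.pi_apply_eq_sum_univ s
  let top (i : ι) : ℝ := if 0 ≤ d i then b i else a i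
  let bot (i : ι) : ℝ := if 0 ≤ d i then a i else b i
  have htop : ℓ top ≤ g := (abs_le.1 (hℓ top fun i => (ite_eq_or_eq _ _ _).symm)).2
  have hbot : -g ≤ ℓ bot := (abs_le.1 (hℓ bot fun i => ite_eq_or_eq _ _ _)).1
  have hwidth : 2 * |ℓ c| ≤ ℓ top - ℓ bot := by
    rw [hsum, hsum, hsum, ← Finset.sum_sub_distrib]
    calc 2 * |∑ i, c i * d i| ≤ 2 * ∑ i, |c i * d i| := by
          gcongr
          exact Finset.abs_sum_le_sum_abs _ _
      _ = ∑ i, 2 * |c i| * |d i| := by simp only [Finset.mul_sum, abs_mul, mul_assoc]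
      _ ≤ ∑ i, (b i - a i) * |d i| := by
          gcongr with i
          exact hc i
      _ = ∑ i, (top i * d i - bot i * d i) := by
          refine Finset.sum_congr rfl fun i _ => ?_
          by_cases hi : 0 ≤ d i
          · simp only [top, bot, if_pos hi, abs_of_nonneg hi, sub_mul]
          · simp only [top, bot, if_neg hi, abs_of_neg (not_le.1 hi)]
            ring
  linarith

variable [NormedAddCommGroup E] [InnerProductSpace ℝ E] {F : (ι → E) → ℝ} {g R r : ℝ}

/-- `F` is linear in the positions of its arguments along any family of parallel lines, each line
being parametrized from its point closest to the origin. -/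
def IsFiberwiseLinear (F : (ι → E) → ℝ) : Prop :=
  ∀ v : E, ‖v‖ = 1 → ∀ x : ι → E, ∃ ℓ : (ι → ℝ) →ₗ[ℝ] ℝ,
    ∀ t : ι → ℝ, F (fun i => x i + t i • v) = ℓ fun i => ⟪v, x i⟫ + t i

lemma AbsBoundedOn.steinerSymmetral [Finite ι] (hF : IsFiberwiseLinear F) {A : Set E}
    (hA : IsCompact A) (hbdd : AbsBoundedOn F g A) {v : E} (hv : ‖v‖ = 1) :
    AbsBoundedOn F g (steinerSymmetral v A) := by
  intro w hw
  choose a b ha hb hab using fun i => exists_chord_of_mem_steinerSymmetral hA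
    (norm_ne_zero_iff.1 (hv ▸ one_ne_zero)) (hw i (mem_univ i))
  obtain ⟨ℓ, hℓ⟩ := hF v hv w
  have hFw : F w = ℓ fun i => ⟪v, w i⟫ := by simpa using hℓ 0
  change |F w| ≤ g
  rw [hFw]
  refine abs_linearMap_le_of_abs_le_at_vertices ℓ (a := fun i => ⟪v, w i⟫ + a i)
    (b := fun i => ⟪v, w i⟫ + b i) (fun i => by simpa using hab i) fun s hs => ?_
  have hends : ∀ i, w i + (s i - ⟪v, w i⟫) • v ∈ A := fun i => by
    rcases hs i with h | h
    · simpa [h] using ha i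
    · simpa [h] using hb i
  have hbound : |F fun i => w i + (s i - ⟪v, w i⟫) • v| ≤ g := hbdd fun i _ => hends i
  rw [hℓ] at hbound
  simpa using hbound

variable [FiniteDimensional ℝ E] [MeasurableSpace E] [BorelSpace E]

/-- The competitors of the symmetrization argument: the compact sets in `closedBall 0 R` on which
`|F| ≤ g`, of at least the volume of `closedBall 0 r`. -/
def boundedCompetitors (F : (ι → E) → ℝ) (g R r : ℝ) : Set (NonemptyCompacts E) :=
  {C | (C : Set E) ⊆ closedBall 0 R ∧ AbsBoundedOn F g (C : Set E) ∧
    volume (closedBall (0 : E) r) ≤ volume (C : Set E)}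

lemma isCompact_boundedCompetitors [Finite ι] (hF : Continuous F) (g R r : ℝ) :
    IsCompact (boundedCompetitors F g R r) :=
  (NonemptyCompacts.isCompact_subsets_of_isCompact (isCompact_closedBall 0 R)).inter_right
    ((isClosed_setOf_univ_pi_subset (isClosed_setOf_abs_le hF g)).inter
      ((upperSemicontinuous_measure_nonemptyCompacts volume).isClosed_preimage _))

lemma exists_volume_inter_closedBall_lt_steinerSymmetral {A : Set E} (hA : IsCompact A)
    (hvol : volume (closedBall (0 : E) r) ≤ volume A) (hBA : volume (closedBall 0 r \ A) ≠ 0) :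
    ∃ v : E, ‖v‖ = 1 ∧
      volume (A ∩ closedBall 0 r) < volume (steinerSymmetral v A ∩ closedBall 0 r) := by
  have mA := hA.measurableSet
  have mB : MeasurableSet (closedBall (0 : E) r) := measurableSet_closedBall
  have hAB : volume (A \ closedBall 0 r) ≠ 0 := fun hnull => by
    have hlt := measure_inter_lt_left mA
      (measure_ne_top_of_subset inter_subset_right hA.measure_ne_top) hBA
    rw [inter_comm, measure_inter_conull' hnull] at hlt
    exact hlt.not_ge hvol
  obtain ⟨v, hv⟩ := exists_measure_inter_preimage_add_ne_zero (mB.diff mA) (mA.diff mB) hBA hAB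
  have hv₀ : v ≠ 0 := by
    rintro rfl
    refine hv (measure_mono_null (fun x hx => ?_) measure_empty)
    exact hx.1.2 (zero_add x ▸ hx.2.1)
  have hunit : ‖‖v‖⁻¹ • v‖ = 1 := norm_smul_inv_norm (𝕜 := ℝ) hv₀
  refine ⟨‖v‖⁻¹ • v, hunit, volume_inter_closedBall_lt_steinerSymmetral hunit hA (s := ‖v‖) ?_⟩
  rwa [smul_inv_smul₀ (norm_ne_zero_iff.2 hv₀)]

lemma exists_boundedCompetitors_volume_inter_lt [Finite ι] (hF : Continuous F)
    (hlin : IsFiberwiseLinear F) {C : NonemptyCompacts E} (hC : C ∈ boundedCompetitors F g R r)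
    (hBC : volume (closedBall 0 r \ (C : Set E)) ≠ 0) :
    ∃ D ∈ boundedCompetitors F g R r,
      volume ((C : Set E) ∩ closedBall 0 r) < volume ((D : Set E) ∩ closedBall 0 r) := by
  obtain ⟨hCR, hCg, hCr⟩ := hC
  obtain ⟨v, hv, hlt⟩ := exists_volume_inter_closedBall_lt_steinerSymmetral C.isCompact hCr hBC
  set S := steinerSymmetral v (C : Set E)
  have hSR : closure S ⊆ closedBall 0 R :=
    closure_minimal (steinerSymmetral_subset_closedBall hv hCR) isClosed_closedBall
  have hne : S.Nonempty :=
    (nonempty_of_measure_ne_zero (ne_bot_of_gt hlt)).mono inter_subset_left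
  refine ⟨⟨⟨closure S, (isCompact_closedBall 0 R).of_isClosed_subset isClosed_closure hSR⟩,
    hne.closure⟩, ⟨hSR, (hCg.steinerSymmetral hlin C.isCompact hv).closure hF, ?_⟩,
    hlt.trans_le (measure_mono (inter_subset_inter_left _ subset_closure))⟩
  calc volume (closedBall 0 r) ≤ volume (C : Set E) := hCr
    _ = volume S := (volume_steinerSymmetral hv C.isCompact).symm
    _ ≤ volume (closure S) := measure_mono subset_closure

lemma exists_boundedCompetitors_volume_closedBall_diff_eq_zero [Finite ι] (hF : Continuous F)
    (hlin : IsFiberwiseLinear F) (hne : (boundedCompetitors F g R r).Nonempty) :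
    ∃ C ∈ boundedCompetitors F g R r, volume (closedBall 0 r \ (C : Set E)) = 0 := by
  have hfin : IsFiniteMeasure (volume.restrict (closedBall (0 : E) r)) :=
    ⟨by simpa using measure_closedBall_lt_top⟩
  obtain ⟨C, hC, hmax⟩ := UpperSemicontinuousOn.exists_isMaxOn hne
    (isCompact_boundedCompetitors hF g R r)
    ((upperSemicontinuous_measure_nonemptyCompacts
      (volume.restrict (closedBall 0 r))).upperSemicontinuousOn _)
  refine ⟨C, hC, by_contra fun hBC => ?_⟩
  obtain ⟨D, hD, hlt⟩ := exists_boundedCompetitors_volume_inter_lt hF hlin hC hBC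
  have hle := hmax hD
  simp only [Set.mem_ofPred_eq, Measure.restrict_apply' measurableSet_closedBall] at hle
  exact hle.not_gt hlt

theorem AbsBoundedOn.closedBall [Finite ι] (hF : Continuous F) (hlin : IsFiberwiseLinear F)
    {K : Set E} (hK : IsCompact K) (hKg : AbsBoundedOn F g K) (hr : 0 < r)
    (hvol : volume (Metric.closedBall (0 : E) r) ≤ volume K) :
    AbsBoundedOn F g (Metric.closedBall 0 r) := by
  have hKne : K.Nonempty := nonempty_of_measure_ne_zero
    ((measure_closedBall_pos volume 0 hr).trans_le hvol).ne'
  obtain ⟨R, hKR⟩ := hK.isBounded.subset_closedBall 0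
  obtain ⟨C, ⟨-, hCg, -⟩, hnull⟩ := exists_boundedCompetitors_volume_closedBall_diff_eq_zero hF hlin
    ⟨⟨⟨K, hK⟩, hKne⟩, hKR, hKg, hvol⟩
  have hball : ball 0 r ⊆ (C : Set E) := by
    rw [← sdiff_eq_empty, ← (isOpen_ball.sdiff C.isCompact.isClosed).measure_eq_zero_iff volume]
    exact measure_mono_null (sdiff_subset_sdiff_left ball_subset_closedBall) hnull
  rw [← closure_ball 0 hr.ne']
  exact (hCg.mono hball).closure hF

lemma IsFiberwiseLinear.exists_abs_le_abs_of_mem_closedBall [Finite ι] (hF : Continuous F)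
    (hlin : IsFiberwiseLinear F) {K : Set E} (hK : IsCompact K) (hr : 0 < r)
    (hvol : volume (closedBall (0 : E) r) ≤ volume K) {y : ι → E} (hy : ∀ i, y i ∈ closedBall 0 r) :
    ∃ w : ι → E, (∀ i, w i ∈ K) ∧ |F y| ≤ |F w| := by
  have hKne : K.Nonempty := nonempty_of_measure_ne_zero
    ((measure_closedBall_pos volume 0 hr).trans_le hvol).ne'
  obtain ⟨w, hw, hmax⟩ := (isCompact_univ_pi fun _ : ι => hK).exists_isMaxOn
    (univ_pi_nonempty_iff.2 fun _ => hKne) hF.abs.continuousOn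
  have hbdd : AbsBoundedOn F |F w| K := fun x hx => hmax hx
  exact ⟨w, fun i => hw i (mem_univ i), hbdd.closedBall hF hlin hK hr hvol fun i _ => hy i⟩

end Symmetrization

section AlternatingForms

open Module

open scoped RealInnerProductSpace

variable {E ι κ : Type*} [NormedAddCommGroup E] [InnerProductSpace ℝ E]

lemma isFiberwiseLinear_alternatingMap [FiniteDimensional ℝ E] [Fintype ι]
    (hE : finrank ℝ E = Fintype.card ι) (ω : E [⋀^ι]→ₗ[ℝ] ℝ) : IsFiberwiseLinear ω := by
  classical
  intro v hv x
  have : Nontrivial E := ⟨v, 0, norm_ne_zero_iff.1 (hv ▸ one_ne_zero)⟩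
  obtain ⟨i₀⟩ := Fintype.card_pos_iff.1 (hE ▸ finrank_pos (R := ℝ) (M := E))
  obtain ⟨b, hb⟩ := Orthonormal.exists_orthonormalBasis_extension_of_card_eq hE
    (v := fun _ => v) (s := {i₀}) (by simp [orthonormal_subsingleton_iff, hv])
  have hbv : b i₀ = v := hb i₀ rfl
  refine ⟨ω b • detRowAlternating.toMultilinearMap.toLinearMap (b.toBasis.toMatrix x) i₀,
    fun t => ?_⟩
  have hrow : b.toBasis.toMatrix (fun i => x i + t i • v) =
      (b.toBasis.toMatrix x).updateRow i₀ fun i => ⟪v, x i⟫ + t i := by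
    ext i j
    rcases eq_or_ne i i₀ with rfl | hi
    · simp [Basis.toMatrix_apply, b.repr_apply_apply, hbv, hv]
    · simp [Basis.toMatrix_apply, b.repr_apply_apply, ← hbv, hi]
  have hdet := congrArg (fun η => η fun i => x i + t i • v) (ω.eq_smul_basis_det b.toBasis)
  rw [AlternatingMap.smul_apply, Basis.det_apply, hrow, OrthonormalBasis.coe_toBasis] at hdet
  exact hdet

lemma IsFiberwiseLinear.comp_sum_smul [Fintype ι] {F : (κ → E) → ℝ} (hF : IsFiberwiseLinear F)
    (c : Matrix κ ι ℝ) : IsFiberwiseLinear fun w : ι → E => F fun k => ∑ i, c k i • w i := by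
  intro v hv x
  obtain ⟨ℓ, hℓ⟩ := hF v hv fun k => ∑ i, c k i • x i
  refine ⟨ℓ ∘ₗ c.mulVecLin, fun t => ?_⟩
  have hline : (fun k => ∑ i, c k i • (x i + t i • v)) =
      fun k => ∑ i, c k i • x i + (c *ᵥ t) k • v := by
    ext k : 1
    simp only [smul_add, smul_smul, Finset.sum_add_distrib, Finset.sum_smul, mulVec, dotProduct]
  refine (congrArg F hline).trans ((hℓ _).trans (congrArg ℓ ?_))
  ext k
  simp only [mulVecLin_apply, mulVec, dotProduct, inner_sum, real_inner_smul_right, mul_add,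
    Finset.sum_add_distrib]

end AlternatingForms

section DifferenceBody

open Metric

/-- The determinant `det (p - r, q - r, z)` for the four differences `p = w 0 - w 4`,
`q = w 1 - w 5`, `r = w 2 - w 6` and `z = w 3 - w 7`, as a function of the eight points `w i`, to
which symmetrization applies. -/
def detOfDifferences (w : Fin 8 → EuclideanSpace ℝ (Fin 3)) : ℝ :=
  det (of ![w 0 - w 4 - (w 2 - w 6), w 1 - w 5 - (w 2 - w 6), w 3 - w 7])

lemma continuous_detOfDifferences : Continuous detOfDifferences := by
  unfold detOfDifferences
  refine Continuous.matrix_det (continuous_pi fun i => ?_)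
  fin_cases i <;> dsimp <;> fun_prop

lemma isFiberwiseLinear_detOfDifferences : IsFiberwiseLinear detOfDifferences := by
  let ω : EuclideanSpace ℝ (Fin 3) [⋀^Fin 3]→ₗ[ℝ] ℝ :=
    detRowAlternating.compLinearMap (WithLp.linearEquiv 2 ℝ (Fin 3 → ℝ)).toLinearMap
  have hω : IsFiberwiseLinear ω := isFiberwiseLinear_alternatingMap (by simp) ω
  convert hω.comp_sum_smul !![1, 0, -1, 0, -1, 0, 1, 0; 0, 1, -1, 0, 0, -1, 1, 0;
    0, 0, 0, 1, 0, 0, 0, -1] using 2 with w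
  simp only [ω, AlternatingMap.compLinearMap_apply, detOfDifferences]
  change det _ = det _
  congr 1
  ext k j
  fin_cases k <;> simp [Fin.sum_univ_eight] <;> ring

lemma exists_detOfDifferences_eq_of_closedBall {r : ℝ} (hr : 0 ≤ r) :
    ∃ y : Fin 8 → EuclideanSpace ℝ (Fin 3), (∀ i, y i ∈ closedBall 0 r) ∧
      detOfDifferences y = 12 * √3 * r ^ 3 := by
  let a := !₂[r, 0, 0]
  let b := !₂[-r / 2, r * √3 / 2, 0]
  let c := !₂[-r / 2, -r * √3 / 2, 0]
  let z := !₂[0, 0, r]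
  refine ⟨![a, b, c, z, -a, -b, -c, -z], fun i => ?_, ?_⟩
  · rw [EuclideanSpace.closedBall_zero_eq r hr, Set.mem_ofPred_eq, Fin.sum_univ_three]
    have hsqrt : √3 ^ 2 = 3 := Real.sq_sqrt zero_le_three
    fin_cases i <;> simp [a, b, c, z] <;> linear_combination r ^ 2 / 4 * hsqrt
  · simp [detOfDifferences, det_fin_three, a, b, c, z]
    ring

lemma exists_volume_closedBall_eq {V : ℝ} (hV : 0 < V) : ∃ r > 0, r ^ 3 = 3 * V / (4 * Real.pi) ∧
    volume (closedBall (0 : EuclideanSpace ℝ (Fin 3)) r) = ENNReal.ofReal V := by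
  let r := (3 * V / (4 * Real.pi)) ^ ((3 : ℕ) : ℝ)⁻¹
  have hr : 0 < r := by positivity
  have hcube : r ^ 3 = 3 * V / (4 * Real.pi) :=
    Real.rpow_inv_natCast_pow (by positivity) three_ne_zero
  refine ⟨r, hr, hcube, ?_⟩
  rw [EuclideanSpace.volume_closedBall_fin_three, ← ENNReal.ofReal_pow hr.le,
    ← ENNReal.ofReal_mul (by positivity), hcube]
  congr 1
  field_simp

lemma exists_le_abs_detOfDifferences {K : Set (EuclideanSpace ℝ (Fin 3))} (hK : IsCompact K)
    (hK₀ : 0 < volume.real K) :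
    ∃ w, (∀ i, w i ∈ K) ∧ 9 * √3 / Real.pi * volume.real K ≤ |detOfDifferences w| := by
  obtain ⟨r, hr, hcube, hvol⟩ := exists_volume_closedBall_eq hK₀
  rw [ofReal_measureReal hK.measure_ne_top] at hvol
  obtain ⟨y, hy, hdet⟩ := exists_detOfDifferences_eq_of_closedBall hr.le
  obtain ⟨w, hw, hle⟩ :=
    isFiberwiseLinear_detOfDifferences.exists_abs_le_abs_of_mem_closedBall
      continuous_detOfDifferences hK hr hvol.le hy
  refine ⟨w, hw, le_trans ?_ ((le_abs_self _).trans hle)⟩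
  rw [hdet, hcube]
  apply le_of_eq
  field_simp
  ring

theorem exists_le_det_of_mem_sub {K : Set (Fin 3 → ℝ)} (hK : IsCompact K)
    (hK₀ : 0 < volume.real K) :
    ∃ p ∈ K - K, ∃ q ∈ K - K, ∃ r ∈ K - K, ∃ z ∈ K - K,
      9 * √3 / Real.pi * volume.real K ≤ det (of ![p - r, q - r, z]) := by
  have hvol : volume.real (WithLp.ofLp ⁻¹' K : Set (EuclideanSpace ℝ (Fin 3))) = volume.real K :=
    (PiLp.volume_preserving_ofLp (Fin 3)).measureReal_preimage hK.nullMeasurableSet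
  have hcpt : IsCompact (WithLp.ofLp ⁻¹' K : Set (EuclideanSpace ℝ (Fin 3))) :=
    (PiLp.homeomorph 2 _).isCompact_preimage.2 hK
  obtain ⟨w, hw, hle⟩ := exists_le_abs_detOfDifferences hcpt (hvol.symm ▸ hK₀)
  have hsub (i j : Fin 8) : (w i).ofLp - (w j).ofLp ∈ K - K := sub_mem_sub (hw i) (hw j)
  rw [hvol, le_abs] at hle
  rcases hle with hle | hle
  · exact ⟨_, hsub 0 4, _, hsub 1 5, _, hsub 2 6, _, hsub 3 7, hle⟩
  · refine ⟨_, hsub 0 4, _, hsub 1 5, _, hsub 2 6, _, hsub 7 3, hle.trans_eq ?_⟩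
    simp [detOfDifferences, det_fin_three]
    ring

end DifferenceBody

section Lattices

variable {n : ℕ}

lemma row_mem_latticeOf_transpose (B : Matrix (Fin n) (Fin n) ℝ) (i : Fin n) :
    B.row i ∈ latticeOf Bᵀ := by
  refine ⟨Pi.single i 1, ?_⟩
  have hcast : (fun j => ((Pi.single i 1 : Fin n → ℤ) j : ℝ)) = Pi.single i 1 := by
    ext j
    simp [Pi.single_apply]
  exact (congrArg _ hcast).trans (mulVec_single_one _ _)

lemma exists_addSubgroup_coe_eq_latticeOf (A : Matrix (Fin n) (Fin n) ℝ) :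
    ∃ L : AddSubgroup (Fin n → ℝ), (L : Set (Fin n → ℝ)) = latticeOf A :=
  ⟨(A.mulVecLin.toAddMonoidHom.comp ((Int.castAddHom ℝ).compLeft (Fin n))).range, rfl⟩

lemma zsmul_mem_latticeOf {A : Matrix (Fin n) (Fin n) ℝ} {x : Fin n → ℝ} (hx : x ∈ latticeOf A)
    (k : ℤ) : k • x ∈ latticeOf A := by
  obtain ⟨L, hL⟩ := exists_addSubgroup_coe_eq_latticeOf A
  rw [← hL] at hx ⊢
  exact L.zsmul_mem hx k

lemma sub_mem_latticeOf {A : Matrix (Fin n) (Fin n) ℝ} {x y : Fin n → ℝ} (hx : x ∈ latticeOf A)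
    (hy : y ∈ latticeOf A) : x - y ∈ latticeOf A := by
  obtain ⟨L, hL⟩ := exists_addSubgroup_coe_eq_latticeOf A
  rw [← hL] at hx hy ⊢
  exact L.sub_mem hx hy

/-- In every direction `u`, some vector of `Λ` has a nonzero component of size at most that of some
vector of `P`. For a lattice `Λ` and a difference body `P = K - K` this says that the layers of `Λ`
orthogonal to `u` have spacing at most the width of `K`. -/
def IsFinerThan (Λ P : Set (Fin n → ℝ)) : Prop :=
  ∀ u : Fin n → ℝ, u ≠ 0 → ∃ x ∈ Λ, ∃ d ∈ P, u ⬝ᵥ x ≠ 0 ∧ |u ⬝ᵥ x| ≤ |u ⬝ᵥ d|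

lemma IsFinerThan.nonSeparable {A : Matrix (Fin n) (Fin n) ℝ} {K : Set (Fin n → ℝ)}
    (hfiner : IsFinerThan (latticeOf A) (K - K)) (hK : Convex ℝ K) :
    NonSeparable (latticeOf A) K := by
  intro u hu c
  obtain ⟨x, hx, _, ⟨k₁, hk₁, k₂, hk₂, rfl⟩, hux, hle⟩ := hfiner u hu
  have himage : uIcc (u ⬝ᵥ k₁) (u ⬝ᵥ k₂) ⊆ (u ⬝ᵥ ·) '' K :=
    (hK.linear_image (dotProductBilin ℝ ℝ u)).ordConnected.uIcc_subset
      (mem_image_of_mem _ hk₁) (mem_image_of_mem _ hk₂)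
  obtain ⟨e, he⟩ : ∃ e : ℤ, (e : ℝ) * (u ⬝ᵥ x) = |u ⬝ᵥ x| :=
    ⟨SignType.sign (u ⬝ᵥ x), by simp [sign_mul_self]⟩
  obtain ⟨m, ⟨hlow, hhigh⟩, -⟩ :=
    existsUnique_add_zsmul_mem_Ico (abs_pos.2 hux) c (min (u ⬝ᵥ k₁) (u ⬝ᵥ k₂))
  have hmem : c + m • |u ⬝ᵥ x| ∈ uIcc (u ⬝ᵥ k₁) (u ⬝ᵥ k₂) := by
    refine ⟨hlow, hhigh.le.trans ?_⟩
    rw [dotProduct_sub, ← max_sub_min_eq_abs'] at hle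
    linarith
  obtain ⟨y, hy, huy⟩ := himage hmem
  refine ⟨(-m * e) • x, zsmul_mem_latticeOf hx _, y, hy, ?_⟩
  dsimp only at huy
  rw [dotProduct_add, huy, ← Int.cast_smul_eq_zsmul ℝ, dotProduct_smul, ← he]
  simp
  ring

lemma exists_dotProduct_row_ne_zero {B : Matrix (Fin n) (Fin n) ℝ} (hB : B.det ≠ 0)
    {u : Fin n → ℝ} (hu : u ≠ 0) : ∃ i, u ⬝ᵥ B.row i ≠ 0 := by
  by_contra! hzero
  exact hu (eq_zero_of_mulVec_eq_zero hB (funext fun i => (dotProduct_comm _ _).trans (hzero i)))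

lemma isFinerThan_of_forall_row_mem {B : Matrix (Fin n) (Fin n) ℝ} (hB : B.det ≠ 0)
    {P : Set (Fin n → ℝ)} (hP : ∀ i, B.row i ∈ P) : IsFinerThan (latticeOf Bᵀ) P := by
  intro u hu
  obtain ⟨i, hi⟩ := exists_dotProduct_row_ne_zero hB hu
  exact ⟨B.row i, row_mem_latticeOf_transpose B i, B.row i, hP i, hi, le_rfl⟩

lemma dTrans_le_of_nonSeparable {A : Matrix (Fin n) (Fin n) ℝ} {K : Set (Fin n → ℝ)}
    (hA : A.det ≠ 0) (hAK : NonSeparable (latticeOf A) K) : dTrans K ≤ volume.real K / |A.det| := by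
  refine csInf_le ⟨0, ?_⟩ ⟨A, hA, hAK, rfl⟩
  rintro _ ⟨_, -, -, rfl⟩
  positivity

end Lattices

section Hexagon

lemma abs_le_abs_or_abs_le_abs_of_mem_segment {x y s : ℝ} (hxy : 0 < x * y)
    (hs : s ∈ segment ℝ x y) : |x| ≤ |s| ∨ |y| ≤ |s| := by
  rw [segment_eq_uIcc] at hs
  rcases pos_and_pos_or_neg_and_neg_of_mul_pos hxy with ⟨hx, hy⟩ | ⟨hx, hy⟩
  · exact (min_le_iff.1 hs.1).imp (abs_le_abs_of_nonneg hx.le) (abs_le_abs_of_nonneg hy.le)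
  · exact (le_max_iff.1 hs.2).imp (abs_le_abs_of_nonpos hx.le) (abs_le_abs_of_nonpos hy.le)

lemma abs_dotProduct_le_or_of_mem_segment {ι : Type*} [Fintype ι] {u a b e : ι → ℝ}
    (hab : 0 < (u ⬝ᵥ a) * (u ⬝ᵥ b)) (he : e ∈ segment ℝ a b) :
    |u ⬝ᵥ a| ≤ |u ⬝ᵥ e| ∨ |u ⬝ᵥ b| ≤ |u ⬝ᵥ e| := by
  refine abs_le_abs_or_abs_le_abs_of_mem_segment hab ?_
  exact (image_segment ℝ (dotProductBilin ℝ ℝ u).toAffineMap a b).subset (mem_image_of_mem _ he)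

lemma exists_abs_dotProduct_le_of_mem_segment {n : ℕ} {Λ P : Set (Fin n → ℝ)}
    {u a b d e : Fin n → ℝ} (ha : a ∈ Λ) (hb : b ∈ Λ) (hd : d ∈ P)
    (hab : 0 < (u ⬝ᵥ a) * (u ⬝ᵥ b)) (he : e ∈ segment ℝ a b) (hed : |u ⬝ᵥ e| = |u ⬝ᵥ d|) :
    ∃ x ∈ Λ, ∃ d ∈ P, u ⬝ᵥ x ≠ 0 ∧ |u ⬝ᵥ x| ≤ |u ⬝ᵥ d| := by
  rcases abs_dotProduct_le_or_of_mem_segment hab he with hle | hle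
  · exact ⟨a, ha, d, hd, left_ne_zero_of_mul hab.ne', hle.trans_eq hed⟩
  · exact ⟨b, hb, d, hd, right_ne_zero_of_mul hab.ne', hle.trans_eq hed⟩

lemma exists_sub_smul_eq {E : Type*} [AddCommGroup E] [Module ℝ E] {α β : ℝ} (hαβ : α * β ≠ 1)
    (p q : E) : ∃ a b : E, a - α • b = p ∧ b - β • a = q := by
  have hδ : 1 - α * β ≠ 0 := sub_ne_zero.2 hαβ.symm
  refine ⟨(1 - α * β)⁻¹ • (p + α • q), (1 - α * β)⁻¹ • (q + β • p), ?_, ?_⟩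
  · match_scalars <;> field_simp
    ring
  · match_scalars <;> field_simp
    ring

lemma sub_smul_mem_segment {E : Type*} [AddCommGroup E] [Module ℝ E] {α : ℝ} (hα₀ : 0 ≤ α)
    (hα₁ : α ≤ 1) (a b : E) : a - α • b ∈ segment ℝ a (a - b) :=
  ⟨1 - α, α, sub_nonneg.2 hα₁, hα₀, sub_add_cancel _ _, by module⟩

lemma det_smul_add_det_smul_add_det_smul (p q r z : Fin 3 → ℝ) :
    det (of ![q, r, z]) • p + det (of ![r, p, z]) • q + det (of ![p, q, z]) • r =
      det (of ![p, q, r]) • z := by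
  ext i
  fin_cases i <;> simp [det_fin_three] <;> ring

variable {P : Set (Fin 3 → ℝ)} {p q r z a b : Fin 3 → ℝ}

-- Modulo `z`, the points `p`, `q` and `-r` lie on sides of the hexagon `±a, ±b, ±(a - b)`.
lemma isFinerThan_of_mem_hexagon (hdet : det (of ![a, b, z]) ≠ 0) (hp : p ∈ P) (hq : q ∈ P)
    (hr : r ∈ P) (hz : z ∈ P) (hpab : p ∈ segment ℝ a (a - b)) (hqab : q ∈ segment ℝ b (b - a))
    {k : ℝ} (hrab : k • z - r ∈ segment ℝ a b) : IsFinerThan (latticeOf (of ![a, b, z])ᵀ) P := by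
  intro u hu
  have haΛ : a ∈ latticeOf (of ![a, b, z])ᵀ := row_mem_latticeOf_transpose _ 0
  have hbΛ : b ∈ latticeOf (of ![a, b, z])ᵀ := row_mem_latticeOf_transpose _ 1
  have hzΛ : z ∈ latticeOf (of ![a, b, z])ᵀ := row_mem_latticeOf_transpose _ 2
  by_cases huz : u ⬝ᵥ z = 0
  swap
  · exact ⟨z, hzΛ, z, hz, huz, le_rfl⟩
  by_cases hab : 0 < (u ⬝ᵥ a) * (u ⬝ᵥ b)
  · refine exists_abs_dotProduct_le_of_mem_segment haΛ hbΛ hr hab hrab ?_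
    rw [dotProduct_sub, dotProduct_smul, huz, smul_zero, zero_sub, abs_neg]
  obtain ⟨i, hi⟩ := exists_dotProduct_row_ne_zero hdet hu
  fin_cases i
  · have hua : u ⬝ᵥ a ≠ 0 := hi
    refine exists_abs_dotProduct_le_of_mem_segment haΛ (sub_mem_latticeOf haΛ hbΛ) hp ?_ hpab rfl
    rw [dotProduct_sub]
    nlinarith [sq_pos_of_ne_zero hua]
  · have hub : u ⬝ᵥ b ≠ 0 := hi
    refine exists_abs_dotProduct_le_of_mem_segment hbΛ (sub_mem_latticeOf hbΛ haΛ) hq ?_ hqab rfl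
    rw [dotProduct_sub]
    nlinarith [sq_pos_of_ne_zero hub]
  · exact absurd huz hi

lemma schur_inequality {x y w : ℝ} (hx : 0 ≤ x) (hy : 0 ≤ y) (hw : 0 ≤ w) :
    0 ≤ x * (x - y) * (x - w) + y * (y - x) * (y - w) + w * (w - x) * (w - y) := by
  wlog hxy : x ≤ y generalizing x y
  · linarith [this hy hx (le_of_not_ge hxy)]
  have ordered {x y w : ℝ} (hx : 0 ≤ x) (hw : 0 ≤ w) (hxy : x ≤ y) (hyw : y ≤ w) :
      0 ≤ x * (x - y) * (x - w) + y * (y - x) * (y - w) + w * (w - x) * (w - y) := by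
    have hfst : 0 ≤ x * ((y - x) * (w - x)) :=
      mul_nonneg hx (mul_nonneg (sub_nonneg.2 hxy) (sub_nonneg.2 (hxy.trans hyw)))
    have hsnd : 0 ≤ (w - y) ^ 2 * (w + (y - x)) :=
      mul_nonneg (sq_nonneg _) (add_nonneg hw (sub_nonneg.2 hxy))
    linarith
  rcases le_total y w with hyw | hwy
  · exact ordered hx hw hxy hyw
  · rcases le_total x w with hxw | hwx
    · linarith [ordered hx hy hxw hwy]
    · linarith [ordered hw hy hwx hxy]

lemma det_sub_smul_sub_smul (α β : ℝ) (a b z : Fin 3 → ℝ) :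
    det (of ![a - α • b, b - β • a, z]) = (1 - α * β) * det (of ![a, b, z]) := by
  simp [det_fin_three]
  ring

lemma det_sub_sub_eq_add_add (p q r z : Fin 3 → ℝ) :
    det (of ![p - r, q - r, z]) =
      det (of ![q, r, z]) + det (of ![r, p, z]) + det (of ![p, q, z]) := by
  simp [det_fin_three]
  ring

lemma smul_sub_smul_add_smul_sub_smul_mem_segment {E : Type*} [AddCommGroup E] [Module ℝ E]
    {x y w α β : ℝ} (hw : 0 < w) (hx : x ≤ y + w) (hy : y ≤ x + w) (hα : 2 * x * α = x + y - w)
    (hβ : 2 * y * β = x + y - w) (a b : E) :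
    w⁻¹ • (x • (a - α • b) + y • (b - β • a)) ∈ segment ℝ a b := by
  refine ⟨(x - y + w) / (2 * w), (y - x + w) / (2 * w), div_nonneg (by linarith) (by linarith),
    div_nonneg (by linarith) (by linarith), by field_simp; ring, ?_⟩
  match_scalars
  · field_simp
    linear_combination hβ
  · field_simp
    linear_combination hα

lemma exists_hexagon_of_det_triangle
    (hx : det (of ![q, r, z]) < det (of ![r, p, z]) + det (of ![p, q, z]))
    (hy : det (of ![r, p, z]) < det (of ![q, r, z]) + det (of ![p, q, z]))
    (hw : det (of ![p, q, z]) < det (of ![q, r, z]) + det (of ![r, p, z])) :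
    ∃ a b : Fin 3 → ℝ, p ∈ segment ℝ a (a - b) ∧ q ∈ segment ℝ b (b - a) ∧
      (∃ k : ℝ, k • z - r ∈ segment ℝ a b) ∧
      4 / 9 * det (of ![p - r, q - r, z]) ≤ det (of ![a, b, z]) := by
  have hcramer := det_smul_add_det_smul_add_det_smul p q r z
  rw [det_sub_sub_eq_add_add]
  set x := det (of ![q, r, z])
  set y := det (of ![r, p, z])
  set w := det (of ![p, q, z]) with hw_def
  have hx₀ : 0 < x := by linarith
  have hy₀ : 0 < y := by linarith
  have hw₀ : 0 < w := by linarith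
  have exists_param {t : ℝ} (ht₀ : 0 < t) (ht : x + y - w < 2 * t) :
      ∃ α, 0 ≤ α ∧ α < 1 ∧ 2 * t * α = x + y - w :=
    ⟨(x + y - w) / (2 * t), div_nonneg (by linarith) (by linarith),
      (div_lt_one (by linarith)).2 ht, mul_div_cancel₀ _ (by linarith)⟩
  obtain ⟨α, hα₀, hα₁, hα⟩ := exists_param hx₀ (by linarith)
  obtain ⟨β, hβ₀, hβ₁, hβ⟩ := exists_param hy₀ (by linarith)
  have hαβ : α * β < 1 := mul_lt_one_of_nonneg_of_lt_one_left hα₀ hα₁ hβ₁.le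
  obtain ⟨a, b, rfl, rfl⟩ := exists_sub_smul_eq hαβ.ne p q
  refine ⟨a, b, sub_smul_mem_segment hα₀ hα₁.le a b, sub_smul_mem_segment hβ₀ hβ₁.le b a,
    ⟨det (of ![a - α • b, b - β • a, r]) / w, ?_⟩, ?_⟩
  · convert smul_sub_smul_add_smul_sub_smul_mem_segment hw₀ hx.le hy.le hα hβ a b using 1
    rw [eq_inv_smul_iff₀ hw₀.ne', smul_sub, smul_smul, mul_div_cancel₀ _ hw₀.ne', ← hcramer,
      add_sub_cancel_right]
  · rw [det_sub_smul_sub_smul] at hw_def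
    have hpos : 0 < x * y * (1 - α * β) := mul_pos (mul_pos hx₀ hy₀) (sub_pos.2 hαβ)
    refine le_of_mul_le_mul_left ?_ hpos
    linear_combination schur_inequality hx₀.le hy₀.le hw₀.le / 9 + x * y * hw_def -
      (x + y + w) / 9 * (hα * (x + y - w) + 2 * x * α * hβ)

theorem exists_isFinerThan_of_mem (hp : p ∈ P) (hq : q ∈ P) (hr : r ∈ P) (hz : z ∈ P)
    (hpos : 0 < det (of ![p - r, q - r, z])) :
    ∃ A : Matrix (Fin 3) (Fin 3) ℝ, 4 / 9 * det (of ![p - r, q - r, z]) ≤ |A.det| ∧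
      IsFinerThan (latticeOf A) P := by
  have of_large {a b : Fin 3 → ℝ} (ha : a ∈ P) (hb : b ∈ P)
      (hle : 4 / 9 * det (of ![p - r, q - r, z]) ≤ |det (of ![a, b, z])|) :
      ∃ A : Matrix (Fin 3) (Fin 3) ℝ, 4 / 9 * det (of ![p - r, q - r, z]) ≤ |A.det| ∧
        IsFinerThan (latticeOf A) P := by
    refine ⟨(of ![a, b, z])ᵀ, by rwa [det_transpose], isFinerThan_of_forall_row_mem
      (abs_pos.1 (by linarith)) fun i => ?_⟩
    fin_cases i
    exacts [ha, hb, hz]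
  rcases le_or_gt (4 / 9 * det (of ![p - r, q - r, z])) |det (of ![q, r, z])| with hle | hx
  · exact of_large hq hr hle
  rcases le_or_gt (4 / 9 * det (of ![p - r, q - r, z])) |det (of ![r, p, z])| with hle | hy
  · exact of_large hr hp hle
  rcases le_or_gt (4 / 9 * det (of ![p - r, q - r, z])) |det (of ![p, q, z])| with hle | hw
  · exact of_large hp hq hle
  have hsum := det_sub_sub_eq_add_add p q r z
  obtain ⟨a, b, hpab, hqab, ⟨k, hrab⟩, hle⟩ := exists_hexagon_of_det_triangle (p := p) (q := q)
    (r := r) (z := z) (by linarith [lt_of_abs_lt hx]) (by linarith [lt_of_abs_lt hy])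
    (by linarith [lt_of_abs_lt hw])
  refine ⟨(of ![a, b, z])ᵀ, by rw [det_transpose]; exact hle.trans (le_abs_self _), ?_⟩
  exact isFinerThan_of_mem_hexagon (ne_of_gt (by linarith)) hp hq hr hz hpab hqab hrab

end Hexagon

/-- For every convex body `K ⊆ ℝ³` one has `d_{3,2}(K) ≤ π/(4√3)`. -/
theorem d32_le_pi_div_four_sqrt_three (K : Set (Fin 3 → ℝ))
    (hKc : IsCompact K) (hKconv : Convex ℝ K) (hKint : (interior K).Nonempty) :
    dTrans K ≤ Real.pi / (4 * Real.sqrt 3) := by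
  have hvol : 0 < volume.real K :=
    ENNReal.toReal_pos (Measure.measure_pos_of_nonempty_interior _ hKint).ne' hKc.measure_ne_top
  obtain ⟨p, hp, q, hq, r, hr, z, hz, hdet⟩ := exists_le_det_of_mem_sub hKc hvol
  have hbound : 0 < 9 * √3 / Real.pi * volume.real K := by positivity
  obtain ⟨A, hA, hfiner⟩ := exists_isFinerThan_of_mem hp hq hr hz (hbound.trans_le hdet)
  have hA₀ : 0 < |A.det| := by linarith
  calc dTrans K ≤ volume.real K / |A.det| :=
        dTrans_le_of_nonSeparable (abs_pos.1 hA₀) (hfiner.nonSeparable hKconv)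
    _ ≤ Real.pi / (4 * √3) := by
        have hlarge : 4 / 9 * (9 * √3 / Real.pi * volume.real K) ≤ |A.det| := by linarith
        rw [div_le_div_iff₀ hA₀ (by positivity)]
        calc volume.real K * (4 * √3)
            = Real.pi * (4 / 9 * (9 * √3 / Real.pi * volume.real K)) := by
              field_simp
          _ ≤ Real.pi * |A.det| := by gcongr
end
end

section
/- Let γ : ℝ → ℝ² and l : ℝ → ℝ be smooth 2π-periodic functions with |γ'(t)| > 0 for all t, and set Γ(t) = γ(t) + l(t)·γ'(t)/|γ'(t)|. Then (1/2)∫₀^{2π} det(Γ(t), Γ'(t)) dt − (1/2)∫₀^{2π} det(γ(t), γ'(t)) dt = (1/2)∫₀^{2π} (l(t)²/|γ'(t)|²)·det(γ'(t), γ''(t)) dt. -/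
open MeasureTheory Real

noncomputable section

/-- `det(a,b) = a₁b₂ − a₂b₁` for vectors of the Euclidean plane. -/
def det2 (a b : EuclideanSpace ℝ (Fin 2)) : ℝ := a 0 * b 1 - a 1 * b 0

/-!
Write `Γ = γ + m γ'` with `m = l / |γ'|`, so that `Γ' = γ' + m γ'' + m' γ'`. Expanding and using
`det(γ', γ') = 0`, the integrand `det(Γ, Γ')` differs from `det(γ, γ')` by `m² det(γ', γ'')` plus
the exact derivative of `m det(γ, γ')`, whose integral over a period vanishes. The same computation
works for every alternating bilinear map in place of `det`.
-/

theorem periodic_deriv {𝕜 E : Type*} [NontriviallyNormedField 𝕜] [NormedAddCommGroup E]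
    [NormedSpace 𝕜 E] {f : 𝕜 → E} {c : 𝕜} (hf : Function.Periodic f c) :
    Function.Periodic (deriv f) c := fun x => by
  rw [← deriv_comp_add_const, funext hf]

section Pointwise

variable {𝕜 E F : Type*} [NontriviallyNormedField 𝕜] [NormedAddCommGroup E] [NormedSpace 𝕜 E]
  [NormedAddCommGroup F] [NormedSpace 𝕜 F]

/-- The curve `γ + m γ'`, whose point at time `t` is obtained by moving from `γ t` along the tangent
line there. The multiplier `m` is relative to the velocity `γ'`, not to the unit tangent, so that
no norm is involved. -/
def tangentOffset (γ : 𝕜 → E) (m : 𝕜 → 𝕜) (t : 𝕜) : E := γ t + m t • deriv γ t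

theorem hasDerivAt_tangentOffset {γ : 𝕜 → E} {m : 𝕜 → 𝕜} {t : 𝕜} (hγ : DifferentiableAt 𝕜 γ t)
    (hγ' : DifferentiableAt 𝕜 (deriv γ) t) (hm : DifferentiableAt 𝕜 m t) :
    HasDerivAt (tangentOffset γ m)
      (deriv γ t + (m t • deriv (deriv γ) t + deriv m t • deriv γ t)) t :=
  hγ.hasDerivAt.add (hm.hasDerivAt.smul hγ'.hasDerivAt)

theorem hasDerivAt_smul_alternating_deriv {ω : E →L[𝕜] E →L[𝕜] F} (hω : ∀ x, ω x x = 0)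
    {γ : 𝕜 → E} {m : 𝕜 → 𝕜} {t : 𝕜} (hγ : DifferentiableAt 𝕜 γ t)
    (hγ' : DifferentiableAt 𝕜 (deriv γ) t) (hm : DifferentiableAt 𝕜 m t) :
    HasDerivAt (fun s => m s • ω (γ s) (deriv γ s))
      (m t • ω (γ t) (deriv (deriv γ) t) + deriv m t • ω (γ t) (deriv γ t)) t := by
  have hωγ : HasDerivAt (fun s => ω (γ s) (deriv γ s)) (ω (γ t) (deriv (deriv γ) t)) t := by
    simpa only [hω, add_zero] using
      ω.hasDerivAt_of_bilinear (fun _ => hγ.hasDerivAt) (fun _ => hγ'.hasDerivAt)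
  exact hm.hasDerivAt.smul hωγ

theorem alternating_tangentOffset_deriv {ω : E →L[𝕜] E →L[𝕜] F} (hω : ∀ x, ω x x = 0)
    {γ : 𝕜 → E} {m : 𝕜 → 𝕜} {t : 𝕜} (hγ : DifferentiableAt 𝕜 γ t)
    (hγ' : DifferentiableAt 𝕜 (deriv γ) t) (hm : DifferentiableAt 𝕜 m t) :
    ω (tangentOffset γ m t) (deriv (tangentOffset γ m) t) =
      ω (γ t) (deriv γ t) + deriv (fun s => m s • ω (γ s) (deriv γ s)) t +
        m t ^ 2 • ω (deriv γ t) (deriv (deriv γ) t) := by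
  rw [(hasDerivAt_tangentOffset hγ hγ' hm).deriv,
    (hasDerivAt_smul_alternating_deriv hω hγ hγ' hm).deriv, tangentOffset]
  simp only [map_add, map_smul, add_apply, smul_apply, hω]
  module

end Pointwise

section Integral

variable {E F : Type*} [NormedAddCommGroup F] [NormedSpace ℝ F] [CompleteSpace F]

theorem integral_alternating_tangentOffset_sub [NormedAddCommGroup E] [NormedSpace ℝ E]
    {ω : E →L[ℝ] E →L[ℝ] F} (hω : ∀ x, ω x x = 0) {γ : ℝ → E} {m : ℝ → ℝ}
    (hγ : ContDiff ℝ 2 γ) (hm : ContDiff ℝ 1 m) (a b : ℝ) :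
    (∫ t in a..b, ω (tangentOffset γ m t) (deriv (tangentOffset γ m) t)) -
        ∫ t in a..b, ω (γ t) (deriv γ t) =
      (m b • ω (γ b) (deriv γ b) - m a • ω (γ a) (deriv γ a)) +
        ∫ t in a..b, m t ^ 2 • ω (deriv γ t) (deriv (deriv γ) t) := by
  have hγ' : ContDiff ℝ 1 (deriv γ) := hγ.deriv'
  have hγ'' : Continuous (deriv (deriv γ)) := hγ'.continuous_deriv_one
  have hexact : ContDiff ℝ 1 fun t => m t • ω (γ t) (deriv γ t) :=
    hm.smul ((ω.contDiff.comp (hγ.of_le one_le_two)).clm_apply hγ')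
  have integrable_base : IntervalIntegrable (fun t => ω (γ t) (deriv γ t)) volume a b :=
    ((ω.continuous.comp hγ.continuous).clm_apply hγ'.continuous).intervalIntegrable a b
  have integrable_exact := hexact.continuous_deriv_one.intervalIntegrable (μ := volume) a b
  have integrable_quadratic : IntervalIntegrable
      (fun t => m t ^ 2 • ω (deriv γ t) (deriv (deriv γ) t)) volume a b :=
    ((hm.continuous.pow 2).smul
      ((ω.continuous.comp hγ'.continuous).clm_apply hγ'')).intervalIntegrable a b
  simp only [fun t => alternating_tangentOffset_deriv hω (hγ.differentiable two_ne_zero t)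
    (hγ'.differentiable one_ne_zero t) (hm.differentiable one_ne_zero t)]
  rw [intervalIntegral.integral_add (integrable_base.add integrable_exact) integrable_quadratic,
    intervalIntegral.integral_add integrable_base integrable_exact,
    intervalIntegral.integral_deriv_of_contDiffOn_uIcc hexact.contDiffOn]
  abel

theorem area_of_offset_curve_general [NormedAddCommGroup E] [InnerProductSpace ℝ E]
    {ω : E →L[ℝ] E →L[ℝ] F} (hω : ∀ x, ω x x = 0) {γ : ℝ → E} {l : ℝ → ℝ} {T : ℝ}
    (hγ : ContDiff ℝ 2 γ) (hl : ContDiff ℝ 1 l) (hγper : Function.Periodic γ T)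
    (hlper : Function.Periodic l T) (hγ' : ∀ t, deriv γ t ≠ 0) (a : ℝ) :
    let Γ := tangentOffset γ fun t => l t / ‖deriv γ t‖
    (∫ t in a..(a + T), ω (Γ t) (deriv Γ t)) - ∫ t in a..(a + T), ω (γ t) (deriv γ t) =
      ∫ t in a..(a + T),
        (l t ^ 2 / ‖deriv γ t‖ ^ 2) • ω (deriv γ t) (deriv (deriv γ) t) := by
  have hm : ContDiff ℝ 1 fun t => l t / ‖deriv γ t‖ :=
    hl.div (hγ.deriv'.norm ℝ hγ') fun t => norm_ne_zero_iff.2 (hγ' t)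
  simp only [integral_alternating_tangentOffset_sub hω hγ hm, hγper a, hlper a,
    periodic_deriv hγper a, sub_self, zero_add, div_pow]

end Integral

/-- The determinant `det2` as a continuous bilinear map, the form in which it can be fed to the
general results on alternating maps. -/
def det2CLM : EuclideanSpace ℝ (Fin 2) →L[ℝ] EuclideanSpace ℝ (Fin 2) →L[ℝ] ℝ :=
  (EuclideanSpace.proj 0).smulRight (EuclideanSpace.proj 1) -
    (EuclideanSpace.proj 1).smulRight (EuclideanSpace.proj 0)

theorem det2CLM_apply (a b : EuclideanSpace ℝ (Fin 2)) : det2CLM a b = det2 a b := rfl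

theorem det2CLM_self (a : EuclideanSpace ℝ (Fin 2)) : det2CLM a a = 0 := by
  rw [det2CLM_apply, det2, mul_comm, sub_self]

/-- If `γ : ℝ → ℝ²` and `l : ℝ → ℝ` are smooth `2π`-periodic functions with
`|γ'| > 0`, and `Γ = γ + l·γ'/|γ'|`, then
`½∫₀^{2π} det(Γ,Γ') − ½∫₀^{2π} det(γ,γ') = ½∫₀^{2π} (l²/|γ'|²)·det(γ',γ'')`. -/
theorem area_of_offset_curve (γ : ℝ → EuclideanSpace ℝ (Fin 2)) (l : ℝ → ℝ)
    (hγ : ContDiff ℝ (⊤ : ℕ∞) γ) (hl : ContDiff ℝ (⊤ : ℕ∞) l)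
    (hγper : Function.Periodic γ (2 * π)) (hlper : Function.Periodic l (2 * π))
    (hγ' : ∀ t, ‖deriv γ t‖ > 0)
    (Γ : ℝ → EuclideanSpace ℝ (Fin 2))
    (hΓ : Γ = fun t => γ t + (l t / ‖deriv γ t‖) • deriv γ t) :
    (1 / 2) * (∫ t in (0 : ℝ)..(2 * π), det2 (Γ t) (deriv Γ t)) -
      (1 / 2) * (∫ t in (0 : ℝ)..(2 * π), det2 (γ t) (deriv γ t)) =
    (1 / 2) * (∫ t in (0 : ℝ)..(2 * π),
      (l t ^ 2 / ‖deriv γ t‖ ^ 2) * det2 (deriv γ t) (deriv (deriv γ) t)) := by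
  obtain rfl : Γ = tangentOffset γ fun t => l t / ‖deriv γ t‖ := hΓ
  simpa only [zero_add, det2CLM_apply, smul_eq_mul, mul_sub] using
    congrArg ((1 / 2 : ℝ) * ·) (area_of_offset_curve_general det2CLM_self
      (contDiff_infty.1 hγ 2) (contDiff_infty.1 hl 1) hγper hlper
      (fun t => norm_pos_iff.1 (hγ' t)) 0)
end
end

section
/- The supremum of d_{2,1}(K) over all convex bodies K in ℝ² equals the supremum of d_{2,1}(K) over all centrally symmetric convex bodies K in ℝ². -/
open MeasureTheory Set Matrix Pointwise

noncomputable section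

/-!
A convex body `K` is compared with its central symmetral `½(K - K)`. A linear functional maps the
two onto intervals of the same length, so they have the same non-separable lattices. Moreover
`|K| ≤ |½(K - K)|`, hence `d(K) ≤ d(½(K - K))`, and the values attained at symmetric bodies are
cofinal among all values.

The volume inequality holds in every dimension, by induction. For convex `C ⊆ E × ℝ` let `C_t ⊆ E`
be the set of points whose fibre is longer than `t`, so that `|C| = ∫ |C_t| dt` over `t > 0`. Each
`C_t` is convex, and averaging fibres gives `½(C_t - C_t) ⊆ (½(C - C))_t`; it remains to apply the
inequality in `E` to `C_t` and to integrate.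
-/

section CentralSymmetral

variable {E F : Type*} [AddCommGroup E] [Module ℝ E] [AddCommGroup F] [Module ℝ F]

/-- The central symmetral `½(K - K)` of `K`, i.e. half of its difference body. For a convex body
`K` it is the centrally symmetric body with the same width as `K` in every direction. -/
def centralSymmetral (K : Set E) : Set E := (1 / 2 : ℝ) • (K - K)

lemma mem_centralSymmetral {K : Set E} {z : E} :
    z ∈ centralSymmetral K ↔ ∃ x ∈ K, ∃ y ∈ K, (1 / 2 : ℝ) • (x - y) = z := by
  simp only [centralSymmetral, mem_smul_set, mem_sub, exists_exists_and_exists_and_eq_and]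

lemma centralSymmetral_mono {K L : Set E} (h : K ⊆ L) :
    centralSymmetral K ⊆ centralSymmetral L :=
  smul_set_mono (sub_subset_sub h h)

lemma neg_centralSymmetral (K : Set E) : -centralSymmetral K = centralSymmetral K := by
  rw [centralSymmetral, ← smul_set_neg, neg_sub]

lemma convex_centralSymmetral {K : Set E} (hK : Convex ℝ K) : Convex ℝ (centralSymmetral K) :=
  (hK.sub hK).smul _

lemma image_centralSymmetral (f : E →ₗ[ℝ] F) (K : Set E) :
    f '' centralSymmetral K = centralSymmetral (f '' K) := by
  rw [centralSymmetral, centralSymmetral, image_smul_set, image_sub]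

variable [TopologicalSpace E] [IsTopologicalAddGroup E] [ContinuousConstSMul ℝ E]

lemma isCompact_centralSymmetral {K : Set E} (hK : IsCompact K) :
    IsCompact (centralSymmetral K) :=
  (sub_image_prod (s := K) ▸ (hK.prod hK).image continuous_sub).smul _

lemma isOpen_centralSymmetral {K : Set E} (hK : IsOpen K) : IsOpen (centralSymmetral K) :=
  hK.sub_right.smul₀ (by norm_num)

lemma interior_centralSymmetral_nonempty {K : Set E} (hK : (interior K).Nonempty) :
    (interior (centralSymmetral K)).Nonempty :=
  (hK.sub hK).smul_set.mono <| interior_maximal (centralSymmetral_mono interior_subset)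
    (isOpen_centralSymmetral isOpen_interior)

end CentralSymmetral

section LongFibers

variable {E : Type*}

/-- The points of `E` over which the fibre of `C ⊆ E × ℝ` contains two points at signed distance
greater than `t`; for convex `C` and `t ≥ 0`, the points whose fibre is longer than `t`. -/
def longFibers (C : Set (E × ℝ)) (t : ℝ) : Set E :=
  {x | ∃ a b, (x, a) ∈ C ∧ (x, b) ∈ C ∧ t < b - a}

lemma isOpen_setOf_mem_longFibers [TopologicalSpace E] {C : Set (E × ℝ)} (hC : IsOpen C) :
    IsOpen {p : E × ℝ | p.1 ∈ longFibers C p.2} := by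
  have eq_iUnion : {p : E × ℝ | p.1 ∈ longFibers C p.2} =
      ⋃ (a : ℝ) (b : ℝ), {p | (p.1, a) ∈ C} ∩ ({p | (p.1, b) ∈ C} ∩ {p | p.2 < b - a}) := by
    ext p
    simp only [longFibers, mem_ofPred_eq, mem_iUnion, mem_inter_iff]
  rw [eq_iUnion]
  refine isOpen_iUnion fun a ↦ isOpen_iUnion fun b ↦ ?_
  have isOpen_mem (c : ℝ) : IsOpen {p : E × ℝ | (p.1, c) ∈ C} := hC.preimage (by fun_prop)
  exact (isOpen_mem a).inter ((isOpen_mem b).inter (isOpen_lt continuous_snd continuous_const))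

lemma isOpen_longFibers [TopologicalSpace E] {C : Set (E × ℝ)} (hC : IsOpen C) (t : ℝ) :
    IsOpen (longFibers C t) :=
  (isOpen_setOf_mem_longFibers hC).preimage (Continuous.prodMk_left t)

variable [AddCommGroup E] [Module ℝ E]

lemma convex_longFibers {C : Set (E × ℝ)} (hC : Convex ℝ C) (t : ℝ) :
    Convex ℝ (longFibers C t) := by
  rintro x ⟨a, b, ha, hb, hab⟩ y ⟨c, d, hc, hd, hcd⟩ α β hα hβ hαβ
  refine ⟨α * a + β * c, α * b + β * d, hC ha hc hα hβ hαβ, hC hb hd hα hβ hαβ, ?_⟩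
  calc t < min (b - a) (d - c) := lt_min hab hcd
    _ ≤ α * (b - a) + β * (d - c) := Convex.min_le_combo _ _ hα hβ hαβ
    _ = α * b + β * d - (α * a + β * c) := by ring

lemma centralSymmetral_longFibers_subset (C : Set (E × ℝ)) (t : ℝ) :
    centralSymmetral (longFibers C t) ⊆ longFibers (centralSymmetral C) t := by
  intro z hz
  obtain ⟨x, ⟨a, b, ha, hb, hab⟩, y, ⟨c, d, hc, hd, hcd⟩, rfl⟩ := mem_centralSymmetral.1 hz
  exact ⟨(1 / 2) * (a - d), (1 / 2) * (b - c), mem_centralSymmetral.2 ⟨_, ha, _, hd, rfl⟩,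
    mem_centralSymmetral.2 ⟨_, hb, _, hc, rfl⟩, by linarith⟩

end LongFibers

lemma ofReal_lt_volume_iff_exists_lt_sub {s : Set ℝ} (hs : Convex ℝ s) {t : ℝ} (ht : 0 ≤ t) :
    ENNReal.ofReal t < volume s ↔ ∃ a b, a ∈ s ∧ b ∈ s ∧ t < b - a := by
  constructor
  · contrapose!
    intro h
    refine (Real.volume_le_diam s).trans (Metric.ediam_le fun a ha b hb ↦ ?_)
    rw [edist_dist, Real.dist_eq]
    exact ENNReal.ofReal_le_ofReal (abs_sub_le_iff.2 ⟨h b a hb ha, h a b ha hb⟩)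
  · rintro ⟨a, b, ha, hb, hab⟩
    calc ENNReal.ofReal t < ENNReal.ofReal (b - a) :=
          (ENNReal.ofReal_lt_ofReal_iff_of_nonneg ht).2 hab
      _ = volume (Icc a b) := Real.volume_Icc.symm
      _ ≤ volume s := measure_mono (hs.ordConnected.out ha hb)

lemma volume_restrict_Ioi_setOf_ofReal_lt (c : ENNReal) :
    volume.restrict (Ioi 0) {t : ℝ | ENNReal.ofReal t < c} = c := by
  rw [Measure.restrict_apply' measurableSet_Ioi]
  induction c with
  | top => simp
  | coe c =>
    have : {t : ℝ | ENNReal.ofReal t < c} ∩ Ioi 0 = Ioo 0 (c : ℝ) := by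
      ext t
      simp only [mem_inter_iff, mem_ofPred_eq, mem_Ioi, mem_Ioo, and_comm (b := 0 < t)]
      refine and_congr_right fun ht ↦ ?_
      rw [ENNReal.ofReal_lt_iff_lt_toReal ht.le ENNReal.coe_ne_top, ENNReal.coe_toReal]
    rw [this, Real.volume_Ioo, sub_zero, ENNReal.ofReal_coe_nnreal]

section MeasureCentralSymmetral

variable {E F : Type*} [NormedAddCommGroup E] [NormedSpace ℝ E] [MeasurableSpace E] [BorelSpace E]
  [NormedAddCommGroup F] [NormedSpace ℝ F] [MeasurableSpace F] [BorelSpace F]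

lemma measure_prod_eq_lintegral_longFibers (μ : Measure E) [SFinite μ]
    {C : Set (E × ℝ)} (hC : Convex ℝ C) (hC_open : IsOpen C) :
    μ.prod volume C = ∫⁻ t in Ioi 0, μ (longFibers C t) := by
  have volume_fiber (x : E) :
      volume.restrict (Ioi 0) {t | x ∈ longFibers C t} = volume (Prod.mk x ⁻¹' C) := by
    have hx : Convex ℝ (Prod.mk x ⁻¹' C) :=
      hC.affine_preimage ((AffineMap.const ℝ ℝ x).prod (AffineMap.id ℝ ℝ))
    rw [← volume_restrict_Ioi_setOf_ofReal_lt (volume (Prod.mk x ⁻¹' C))]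
    exact measure_congr <| (ae_restrict_iff' measurableSet_Ioi).2 <| .of_forall fun t ht ↦
      propext (ofReal_lt_volume_iff_exists_lt_sub hx (mem_Ioi.1 ht).le).symm
  calc μ.prod volume C = ∫⁻ x, volume (Prod.mk x ⁻¹' C) ∂μ :=
      Measure.prod_apply hC_open.measurableSet
    _ = ∫⁻ x, volume.restrict (Ioi 0) {t | x ∈ longFibers C t} ∂μ := by simp only [volume_fiber]
    _ = μ.prod (volume.restrict (Ioi 0)) {p | p.1 ∈ longFibers C p.2} :=
      (Measure.prod_apply (isOpen_setOf_mem_longFibers hC_open).measurableSet).symm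
    _ = ∫⁻ t in Ioi 0, μ (longFibers C t) :=
      Measure.prod_apply_symm (isOpen_setOf_mem_longFibers hC_open).measurableSet

/-- `μ` does not decrease when an open convex set is replaced by its central symmetral. This is the
statement carried through the induction on the dimension; openness makes every set involved
measurable. -/
def IncreasesUnderSymmetrization (μ : Measure E) : Prop :=
  ∀ ⦃C : Set E⦄, Convex ℝ C → IsOpen C → μ C ≤ μ (centralSymmetral C)

lemma IncreasesUnderSymmetrization.prod_volume {μ : Measure E} [SFinite μ]
    (hμ : IncreasesUnderSymmetrization μ) :
    IncreasesUnderSymmetrization (μ.prod (volume : Measure ℝ)) := by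
  intro C hC hC_open
  rw [measure_prod_eq_lintegral_longFibers μ hC hC_open, measure_prod_eq_lintegral_longFibers μ
    (convex_centralSymmetral hC) (isOpen_centralSymmetral hC_open)]
  refine lintegral_mono fun t ↦ ?_
  calc μ (longFibers C t) ≤ μ (centralSymmetral (longFibers C t)) :=
        hμ (convex_longFibers hC t) (isOpen_longFibers hC_open t)
    _ ≤ μ (longFibers (centralSymmetral C) t) :=
        measure_mono (centralSymmetral_longFibers_subset C t)

lemma exists_addHaar_eq_mul_addHaar_image [FiniteDimensional ℝ F] (μ : Measure E)
    [μ.IsAddHaarMeasure] (ν : Measure F) [ν.IsAddHaarMeasure] (e : E ≃L[ℝ] F) :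
    ∃ c : ENNReal, ∀ s, μ s = c * ν (e '' s) := by
  have : (μ.map e).IsAddHaarMeasure := e.isAddHaarMeasure_map μ
  have map_eq_smul : μ.map e = Measure.addHaarScalarFactor (μ.map e) ν • ν :=
    Measure.isAddLeftInvariant_eq_smul _ _
  refine ⟨Measure.addHaarScalarFactor (μ.map e) ν, fun s ↦ ?_⟩
  calc μ s = μ (e ⁻¹' (e '' s)) := by rw [e.injective.preimage_image]
    _ = μ.map e (e '' s) := (e.toHomeomorph.toMeasurableEquiv.map_apply _).symm
    _ = (Measure.addHaarScalarFactor (μ.map e) ν • ν) (e '' s) := congrArg (· (e '' s)) map_eq_smul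
    _ = Measure.addHaarScalarFactor (μ.map e) ν * ν (e '' s) := rfl

lemma IncreasesUnderSymmetrization.of_continuousLinearEquiv [FiniteDimensional ℝ F]
    {μ : Measure E} [μ.IsAddHaarMeasure] {ν : Measure F} [ν.IsAddHaarMeasure]
    (hν : IncreasesUnderSymmetrization ν) (e : E ≃L[ℝ] F) : IncreasesUnderSymmetrization μ := by
  intro C hC hC_open
  obtain ⟨c, hc⟩ := exists_addHaar_eq_mul_addHaar_image μ ν e
  calc μ C = c * ν (e '' C) := hc C
    _ ≤ c * ν (centralSymmetral (e '' C)) :=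
      mul_le_mul_right (hν (hC.linear_image e.toLinearMap) (e.isOpenMap C hC_open)) c
    _ = c * ν (e '' centralSymmetral C) := by
      rw [← e.coe_toLinearEquiv, ← LinearEquiv.coe_coe, image_centralSymmetral]
    _ = μ (centralSymmetral C) := (hc _).symm

lemma increasesUnderSymmetrization_volume_pi (n : ℕ) :
    IncreasesUnderSymmetrization (volume : Measure (Fin n → ℝ)) := by
  induction n with
  | zero =>
    exact fun C _ _ ↦ measure_mono fun x hx ↦
      mem_centralSymmetral.2 ⟨x, hx, x, hx, Subsingleton.elim _ _⟩
  | succ n ih =>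
    refine ih.prod_volume.of_continuousLinearEquiv (ContinuousLinearEquiv.ofFinrankEq ?_)
    simp

variable [FiniteDimensional ℝ E] (μ : Measure E) [μ.IsAddHaarMeasure]

lemma increasesUnderSymmetrization_addHaar : IncreasesUnderSymmetrization μ :=
  (increasesUnderSymmetrization_volume_pi (Module.finrank ℝ E)).of_continuousLinearEquiv
    (ContinuousLinearEquiv.ofFinrankEq (Module.finrank_fin_fun ℝ).symm)

theorem measure_le_measure_centralSymmetral {K : Set E} (hK : Convex ℝ K) :
    μ K ≤ μ (centralSymmetral K) :=
  calc μ K = μ (interior K) :=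
        (measure_congr (interior_ae_eq_of_null_frontier (hK.addHaar_frontier μ))).symm
    _ ≤ μ (centralSymmetral (interior K)) :=
        increasesUnderSymmetrization_addHaar μ hK.interior isOpen_interior
    _ ≤ μ (centralSymmetral K) := measure_mono (centralSymmetral_mono interior_subset)

end MeasureCentralSymmetral

lemma centralSymmetral_Icc (a b : ℝ) :
    centralSymmetral (Icc a b) = (-((a + b) / 2)) +ᵥ Icc a b := by
  ext z
  rw [mem_centralSymmetral, mem_vadd_set]
  constructor
  · rintro ⟨x, ⟨hax, hxb⟩, y, ⟨hay, hyb⟩, rfl⟩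
    refine ⟨(x - y) / 2 + (a + b) / 2, ⟨by linarith, by linarith⟩, ?_⟩
    simp only [vadd_eq_add, smul_eq_mul]
    ring
  · rintro ⟨x, ⟨hax, hxb⟩, rfl⟩
    refine ⟨x, ⟨hax, hxb⟩, a + b - x, ⟨by linarith, by linarith⟩, ?_⟩
    simp only [vadd_eq_add, smul_eq_mul]
    ring

lemma exists_centralSymmetral_eq_vadd {s : Set ℝ} (hs : Convex ℝ s) (hs_compact : IsCompact s) :
    ∃ v : ℝ, centralSymmetral s = v +ᵥ s := by
  rcases s.eq_empty_or_nonempty with rfl | hne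
  · exact ⟨0, by simp [centralSymmetral]⟩
  · rw [eq_Icc_of_connected_compact (hs.isConnected hne) hs_compact]
    exact ⟨_, centralSymmetral_Icc _ _⟩

section Density

variable {n : ℕ} {K L Λ : Set (Fin n → ℝ)}

lemma nonSeparable_iff_image_add_image :
    NonSeparable Λ K ↔ ∀ u : Fin n → ℝ, u ≠ 0 →
      dotProductBilin ℝ ℝ u '' Λ + dotProductBilin ℝ ℝ u '' K = univ := by
  simp only [NonSeparable, eq_univ_iff_forall, mem_add, exists_mem_image, dotProduct_add,
    dotProductBilin_apply_apply]

theorem nonSeparable_centralSymmetral_iff (hK : Convex ℝ K) (hK_compact : IsCompact K) :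
    NonSeparable Λ (centralSymmetral K) ↔ NonSeparable Λ K := by
  simp only [nonSeparable_iff_image_add_image]
  refine forall₂_congr fun u _ ↦ ?_
  obtain ⟨v, hv⟩ := exists_centralSymmetral_eq_vadd (hK.linear_image (dotProductBilin ℝ ℝ u))
    (hK_compact.image (LinearMap.continuous_of_finiteDimensional _))
  rw [image_centralSymmetral, hv, add_vadd_comm, vadd_set_eq_univ]

-- If no lattice is admissible, both infima are the junk value `sInf ∅ = 0`.
lemma dTrans_eq_volume_mul_sInf (K : Set (Fin n → ℝ)) :
    dTrans K = volume.real K * sInf {d | ∃ A : Matrix (Fin n) (Fin n) ℝ, A.det ≠ 0 ∧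
      NonSeparable (latticeOf A) K ∧ d = |A.det|⁻¹} := by
  rw [← smul_eq_mul, ← Real.sInf_smul_of_nonneg measureReal_nonneg, dTrans]
  congr 1
  ext d
  simp only [mem_smul_set, mem_ofPred_eq]
  constructor
  · rintro ⟨A, hA, hsep, rfl⟩
    exact ⟨_, ⟨A, hA, hsep, rfl⟩, (div_eq_mul_inv _ _).symm⟩
  · rintro ⟨_, ⟨A, hA, hsep, rfl⟩, rfl⟩
    exact ⟨A, hA, hsep, (div_eq_mul_inv _ _).symm⟩

lemma dTrans_le_dTrans_of_volume_le (hL : volume L ≠ ⊤) (hKL : volume K ≤ volume L)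
    (h : ∀ Λ, NonSeparable Λ L ↔ NonSeparable Λ K) : dTrans K ≤ dTrans L := by
  simp only [dTrans_eq_volume_mul_sInf, h]
  refine mul_le_mul_of_nonneg_right (ENNReal.toReal_mono hL hKL) (Real.sInf_nonneg ?_)
  rintro _ ⟨A, -, -, rfl⟩
  positivity

theorem dTrans_le_dTrans_centralSymmetral (hK : Convex ℝ K) (hK_compact : IsCompact K) :
    dTrans K ≤ dTrans (centralSymmetral K) :=
  dTrans_le_dTrans_of_volume_le (isCompact_centralSymmetral hK_compact).measure_lt_top.ne
    (measure_le_measure_centralSymmetral volume hK)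
    fun _ ↦ nonSeparable_centralSymmetral_iff hK hK_compact

end Density

theorem sSup_d21_eq_sSup_d21_symm_general (n : ℕ) :
    sSup {d : ℝ | ∃ K : Set (Fin n → ℝ),
        IsCompact K ∧ Convex ℝ K ∧ (interior K).Nonempty ∧ d = dTrans K} =
    sSup {d : ℝ | ∃ K : Set (Fin n → ℝ),
        IsCompact K ∧ Convex ℝ K ∧ (interior K).Nonempty ∧ K = -K ∧ d = dTrans K} := by
  refine csSup_eq_csSup_of_forall_exists_le ?_ ?_
  · rintro _ ⟨K, hcompact, hconvex, hint, rfl⟩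
    exact ⟨_, ⟨centralSymmetral K, isCompact_centralSymmetral hcompact,
      convex_centralSymmetral hconvex, interior_centralSymmetral_nonempty hint,
      (neg_centralSymmetral K).symm, rfl⟩, dTrans_le_dTrans_centralSymmetral hconvex hcompact⟩
  · rintro _ ⟨K, hcompact, hconvex, hint, -, rfl⟩
    exact ⟨_, ⟨K, hcompact, hconvex, hint, rfl⟩, le_rfl⟩

/-- The supremum of `d_{2,1}` over all convex bodies in `ℝ²` equals its supremum
over all centrally symmetric convex bodies in `ℝ²`. -/
theorem sSup_d21_eq_sSup_d21_symm :
    sSup {d : ℝ | ∃ K : Set (Fin 2 → ℝ),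
        IsCompact K ∧ Convex ℝ K ∧ (interior K).Nonempty ∧ d = dTrans K} =
    sSup {d : ℝ | ∃ K : Set (Fin 2 → ℝ),
        IsCompact K ∧ Convex ℝ K ∧ (interior K).Nonempty ∧ K = -K ∧ d = dTrans K} :=
  sSup_d21_eq_sSup_d21_symm_general 2
end
end

section
/- Let K be a centrally symmetric convex body in ℝⁿ. Then ℤⁿ + K is non-separable if and only if ℤⁿ is admissible for (1/2)K°, i.e., ℤⁿ ∩ int((1/2)K°) = {0}. -/
open MeasureTheory Set Matrix Pointwise

noncomputable section

/-- The polar body `K° = {x | ∀ y ∈ K, ⟨y,x⟩ ≤ 1}`. -/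
def polarBody {n : ℕ} (K : Set (Fin n → ℝ)) : Set (Fin n → ℝ) :=
  {x | ∀ y ∈ K, y ⬝ᵥ x ≤ 1}

/-- The integer lattice `ℤⁿ ⊆ ℝⁿ`. -/
def intLattice (n : ℕ) : Set (Fin n → ℝ) :=
  Set.range fun m : Fin n → ℤ => fun i => (m i : ℝ)

/-!
A symmetric convex set `K` is balanced, and for balanced `K` non-separability says that for all
`u ≠ 0` and `c` there are `x ∈ ℤⁿ` and `y ∈ K` with `|c - u · x| ≤ |u · y|`. Admissibility says that
every nonzero `x ∈ ℤⁿ` has a `y ∈ K` with `1/2 ≤ |x · y|`. Taking `u ∈ ℤⁿ` and `c = 1/2`, which is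
at distance `1/2` from the integers, the former gives the latter. Conversely, the group `u · ℤⁿ` is
either cyclic or dense in `ℝ`. If it is `ℤ s`, then `u = s x` with `x ∈ ℤⁿ`, and rounding `c / s`
leaves an error of at most `|s| / 2 ≤ |u · y|`. If it is dense, any `y ∈ K` with `u · y ≠ 0` will
do. Such a `y` exists: were `K` orthogonal to `u`, a nonzero integer point close enough to the line
`ℝ u`, which exists by Dirichlet's simultaneous approximation, would violate admissibility.
-/

open Filter Topology

section Pairing

variable {ι : Type*} [Fintype ι] {K : Set (ι → ℝ)}

lemma exists_mem_dotProduct_eq_of_balanced (hK : Balanced ℝ K) {u y : ι → ℝ} (hy : y ∈ K)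
    {d : ℝ} (hd : |d| ≤ |u ⬝ᵥ y|) : ∃ z ∈ K, u ⬝ᵥ z = d := by
  -- If `u ⬝ᵥ y = 0` then `d = 0`, and `0 / 0 = 0` makes the witness `0`.
  refine ⟨(d / (u ⬝ᵥ y)) • y, hK.smul_mem ?_ hy, ?_⟩
  · rw [norm_div]
    exact div_le_one_of_le₀ hd (norm_nonneg _)
  · rw [dotProduct_smul, smul_eq_mul]
    exact div_mul_cancel_of_imp fun h => by simpa [h] using hd

lemma forall_dotProduct_lt_iff_forall_abs_lt (hK : ∀ y ∈ K, -y ∈ K) {x : ι → ℝ} {r : ℝ} :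
    (∀ y ∈ K, y ⬝ᵥ x < r) ↔ ∀ y ∈ K, |x ⬝ᵥ y| < r := by
  simp_rw [dotProduct_comm x]
  refine ⟨fun h y hy => abs_lt.2 ⟨?_, h y hy⟩, fun h y hy => (abs_lt.1 (h y hy)).2⟩
  rw [neg_lt, ← neg_dotProduct]
  exact h (-y) (hK y hy)

lemma isOpen_setOf_forall_dotProduct_mem (hK : IsCompact K) {U : Set ℝ} (hU : IsOpen U) :
    IsOpen {x : ι → ℝ | ∀ y ∈ K, y ⬝ᵥ x ∈ U} := by
  have hcont : Continuous fun p : (ι → ℝ) × (ι → ℝ) => p.2 ⬝ᵥ p.1 :=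
    continuous_snd.dotProduct continuous_fst
  refine isOpen_iff_eventually.2 fun x hx => ?_
  exact hK.eventually_forall_of_forall_eventually fun y hy =>
    hcont.continuousAt.eventually_mem (hU.mem_nhds (hx y hy))

end Pairing

lemma nonSeparable_iff_of_balanced {n : ℕ} {Λ K : Set (Fin n → ℝ)} (hK : Balanced ℝ K) :
    NonSeparable Λ K ↔ ∀ u ≠ 0, ∀ c, ∃ x ∈ Λ, ∃ y ∈ K, |c - u ⬝ᵥ x| ≤ |u ⬝ᵥ y| := by
  refine forall₃_congr fun u _ c => exists_congr fun x => and_congr_right fun _ => ⟨?_, ?_⟩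
  · rintro ⟨y, hy, rfl⟩
    exact ⟨y, hy, by rw [dotProduct_add, add_sub_cancel_left]⟩
  · rintro ⟨y, hy, hle⟩
    obtain ⟨z, hz, hzc⟩ := exists_mem_dotProduct_eq_of_balanced hK hy hle
    exact ⟨z, hz, by rw [dotProduct_add, hzc, add_sub_cancel]⟩

section Polar

variable {n : ℕ} {K : Set (Fin n → ℝ)} {r : ℝ}

lemma mem_smul_polarBody (hr : 0 < r) {x : Fin n → ℝ} :
    x ∈ r • polarBody K ↔ ∀ y ∈ K, y ⬝ᵥ x ≤ r := by
  rw [mem_smul_set_iff_inv_smul_mem₀ hr.ne']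
  refine forall₂_congr fun y _ => ?_
  rw [dotProduct_smul, smul_eq_mul, inv_mul_le_iff₀ hr, mul_one]

lemma mem_interior_smul_polarBody (hK : IsCompact K) (hr : 0 < r) {x : Fin n → ℝ} :
    x ∈ interior (r • polarBody K) ↔ ∀ y ∈ K, y ⬝ᵥ x < r := by
  constructor
  · intro hx y hy
    have hcont : Continuous fun t : ℝ => t • x := by fun_prop
    have hlim : Tendsto (fun t : ℝ => t • x) (𝓝[>] 1) (𝓝 x) :=
      tendsto_nhdsWithin_of_tendsto_nhds (by simpa only [one_smul] using hcont.tendsto 1)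
    obtain ⟨t, htx, ht : 1 < t⟩ :=
      ((hlim.eventually (mem_interior_iff_mem_nhds.1 hx)).and self_mem_nhdsWithin).exists
    have hle : t * (y ⬝ᵥ x) ≤ r := by
      simpa only [dotProduct_smul, smul_eq_mul] using (mem_smul_polarBody hr).1 htx y hy
    by_contra! hge
    exact (lt_mul_of_one_lt_left hr ht).not_ge (hle.trans' (by gcongr))
  · have hsub : {x | ∀ y ∈ K, y ⬝ᵥ x ∈ Iio r} ⊆ r • polarBody K := fun x hx =>
      (mem_smul_polarBody hr).2 fun y hy => (hx y hy).le
    exact fun hx => interior_maximal hsub (isOpen_setOf_forall_dotProduct_mem hK isOpen_Iio) hx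

lemma inter_interior_smul_polarBody_eq_singleton_zero_iff {Λ : Set (Fin n → ℝ)} (hΛ : 0 ∈ Λ)
    (hKc : IsCompact K) (hK : ∀ y ∈ K, -y ∈ K) (hr : 0 < r) :
    Λ ∩ interior (r • polarBody K) = {0} ↔ ∀ x ∈ Λ, x ≠ 0 → ∃ y ∈ K, r ≤ |x ⬝ᵥ y| := by
  have hzero : 0 ∈ Λ ∩ interior (r • polarBody K) :=
    ⟨hΛ, (mem_interior_smul_polarBody hKc hr).2 fun y _ => by rwa [dotProduct_zero]⟩
  rw [← (singleton_subset_iff.2 hzero).ge_iff_eq']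
  refine forall_congr' fun x => ?_
  rw [mem_inter_iff, and_imp, mem_interior_smul_polarBody hKc hr,
    forall_dotProduct_lt_iff_forall_abs_lt hK, mem_singleton_iff, ← not_imp_not (a := x = 0)]
  push Not
  rfl

end Polar

section Diophantine

lemma exists_norm_nsmul_sub_intCast_lt {ι : Type*} [Fintype ι] (u : ι → ℝ) {δ : ℝ} (hδ : 0 < δ) :
    ∃ k : ℕ, 0 < k ∧ ∃ m : ι → ℤ, ‖k • u - fun i => (m i : ℝ)‖ < δ := by
  -- The multiples of a point of the compact group `(ℝ/ℤ)^ι` return to every neighbourhood of `0`.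
  have hcluster := mapClusterPt_zero_atTop_nsmul fun i => (u i : UnitAddCircle)
  obtain ⟨k, hkδ, hk⟩ := ((hcluster.frequently (Metric.ball_mem_nhds 0 hδ)).and_eventually
    (eventually_gt_atTop 0)).exists
  refine ⟨k, hk, fun i => round (k • u i), (pi_norm_lt_iff hδ).2 fun i => ?_⟩
  have hi := (pi_norm_lt_iff hδ).1 (mem_ball_zero_iff.1 hkδ) i
  rwa [Pi.smul_apply, ← AddCircle.coe_nsmul, UnitAddCircle.norm_eq] at hi

variable {n : ℕ}

lemma exists_mem_intLattice_ne_zero_norm_smul_sub_lt {u : Fin n → ℝ} (hu : u ≠ 0) {δ : ℝ}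
    (hδ : 0 < δ) : ∃ x ∈ intLattice n, x ≠ 0 ∧ ∃ t : ℝ, ‖t • u - x‖ < δ := by
  -- Normalizing `u` keeps its positive multiples at distance at least `1` from `0`.
  obtain ⟨k, hk, m, hm⟩ :=
    exists_norm_nsmul_sub_intCast_lt (‖u‖⁻¹ • u) (lt_min hδ one_pos)
  refine ⟨_, ⟨m, rfl⟩, fun hzero => ?_, k • ‖u‖⁻¹, ?_⟩
  · have hlt : (k : ℝ) < 1 := by
      simpa [hzero, norm_smul, hu, ← Nat.cast_smul_eq_nsmul ℝ] using hm.trans_le (min_le_right _ _)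
    exact hlt.not_ge (mod_cast hk)
  · rw [smul_assoc]
    exact hm.trans_le (min_le_left _ _)

lemma exists_mem_intLattice_forall_abs_dotProduct_lt {K : Set (Fin n → ℝ)} (hK : IsCompact K)
    {u : Fin n → ℝ} (hu : u ≠ 0) (huK : ∀ y ∈ K, u ⬝ᵥ y = 0) {r : ℝ} (hr : 0 < r) :
    ∃ x ∈ intLattice n, x ≠ 0 ∧ ∀ y ∈ K, |x ⬝ᵥ y| < r := by
  have hopen := isOpen_setOf_forall_dotProduct_mem hK (U := Metric.ball 0 r) Metric.isOpen_ball
  obtain ⟨δ, hδ, hball⟩ := Metric.isOpen_iff.1 hopen 0 (by simp [hr])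
  obtain ⟨x, hx, hx0, t, ht⟩ := exists_mem_intLattice_ne_zero_norm_smul_sub_lt hu hδ
  refine ⟨x, hx, hx0, fun y hy => ?_⟩
  have hty := hball (mem_ball_zero_iff.2 ht) y hy
  rwa [mem_ball_zero_iff, Real.norm_eq_abs, dotProduct_comm, sub_dotProduct, smul_dotProduct,
    huK y hy, smul_zero, zero_sub, abs_neg] at hty

lemma zero_mem_intLattice : (0 : Fin n → ℝ) ∈ intLattice n :=
  ⟨0, by ext; simp⟩

lemma exists_intCast_eq_dotProduct {x y : Fin n → ℝ} (hx : x ∈ intLattice n)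
    (hy : y ∈ intLattice n) : ∃ k : ℤ, k = x ⬝ᵥ y := by
  obtain ⟨⟨a, rfl⟩, ⟨b, rfl⟩⟩ := hx, hy
  exact ⟨a ⬝ᵥ b, by simp [dotProduct]⟩

lemma half_le_abs_half_sub_intCast (k : ℤ) : (2⁻¹ : ℝ) ≤ |2⁻¹ - (k : ℝ)| := by
  have hround := round_le (2⁻¹ : ℝ) k
  rw [round_two_inv] at hround
  exact hround.trans' (by norm_num)

lemma image_dotProduct_intLattice (u : Fin n → ℝ) :
    (u ⬝ᵥ ·) '' intLattice n = AddSubgroup.closure (range u) := by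
  ext c
  rw [SetLike.mem_coe, AddSubgroup.mem_closure_range_iff_of_fintype, intLattice, ← range_comp]
  simp [dotProduct, mul_comm, eq_comm]

lemma dense_image_dotProduct_intLattice_or_eq_zmultiples (u : Fin n → ℝ) :
    Dense ((u ⬝ᵥ ·) '' intLattice n) ∨ ∃ s : ℝ, ∃ x ∈ intLattice n, u = s • x ∧
      (u ⬝ᵥ ·) '' intLattice n = AddSubgroup.zmultiples s := by
  rw [image_dotProduct_intLattice]
  refine (AddSubgroup.dense_or_cyclic _).imp_right ?_
  rintro ⟨s, hs⟩
  rw [← AddSubgroup.zmultiples_eq_closure] at hs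
  have hcoord (i : Fin n) : ∃ k : ℤ, k • s = u i :=
    AddSubgroup.mem_zmultiples_iff.1 (hs ▸ AddSubgroup.subset_closure (mem_range_self i))
  choose w hw using hcoord
  refine ⟨s, _, ⟨w, rfl⟩, ?_, congrArg _ hs⟩
  ext i
  simp [← hw, mul_comm]

lemma exists_mem_zmultiples_abs_sub_le {s : ℝ} (hs : s ≠ 0) (c : ℝ) :
    ∃ d ∈ AddSubgroup.zmultiples s, |c - d| ≤ |s| * 2⁻¹ := by
  refine ⟨round (c / s) • s, AddSubgroup.zsmul_mem_zmultiples s _, ?_⟩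
  calc |c - round (c / s) • s| = |s| * |c / s - round (c / s)| := by
        rw [← abs_mul, mul_sub, mul_div_cancel₀ c hs, zsmul_eq_mul, mul_comm s]
    _ ≤ |s| * 2⁻¹ := by
        gcongr
        simpa using abs_sub_round (c / s)

lemma exists_abs_sub_dotProduct_le_of_forall_half_le {K : Set (Fin n → ℝ)} (hK : IsCompact K)
    (hadm : ∀ x ∈ intLattice n, x ≠ 0 → ∃ y ∈ K, 2⁻¹ ≤ |x ⬝ᵥ y|) {u : Fin n → ℝ} (hu : u ≠ 0)
    (c : ℝ) : ∃ x ∈ intLattice n, ∃ y ∈ K, |c - u ⬝ᵥ x| ≤ |u ⬝ᵥ y| := by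
  rcases dense_image_dotProduct_intLattice_or_eq_zmultiples u with
    hdense | ⟨s, x, hx, rfl, hcyclic⟩
  · have hexists : ∃ y ∈ K, u ⬝ᵥ y ≠ 0 := by
      by_contra! huK
      obtain ⟨x, hx, hx0, hlt⟩ :=
        exists_mem_intLattice_forall_abs_dotProduct_lt hK hu huK (r := 2⁻¹) (by norm_num)
      obtain ⟨y, hy, hle⟩ := hadm x hx hx0
      exact (hlt y hy).not_ge hle
    obtain ⟨y, hy, huy⟩ := hexists
    obtain ⟨_, ⟨x, hx, rfl⟩, hdist⟩ := hdense.exists_dist_lt c (abs_pos.2 huy)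
    exact ⟨x, hx, y, hy, hdist.le⟩
  · obtain ⟨hs, hx0⟩ := smul_ne_zero_iff.1 hu
    obtain ⟨y, hy, hle⟩ := hadm x hx hx0
    obtain ⟨d, hd, hcd⟩ := exists_mem_zmultiples_abs_sub_le hs c
    obtain ⟨z, hz, rfl⟩ := hcyclic.ge hd
    refine ⟨z, hz, y, hy, hcd.trans ?_⟩
    rw [smul_dotProduct, smul_eq_mul, abs_mul]
    gcongr

end Diophantine

theorem nonSeparable_iff_admissible_half_polar_general {n : ℕ} (K : Set (Fin n → ℝ))
    (hKc : IsCompact K) (hK : Balanced ℝ K) :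
    NonSeparable (intLattice n) K ↔
      intLattice n ∩ interior ((2⁻¹ : ℝ) • polarBody K) = {0} := by
  rw [nonSeparable_iff_of_balanced hK, inter_interior_smul_polarBody_eq_singleton_zero_iff
    zero_mem_intLattice hKc (fun _ => hK.neg_mem_iff.2) (by norm_num)]
  constructor
  · intro hsep x hx hx0
    obtain ⟨z, hz, y, hy, hle⟩ := hsep x hx0 2⁻¹
    obtain ⟨k, hk⟩ := exists_intCast_eq_dotProduct hx hz
    exact ⟨y, hy, (half_le_abs_half_sub_intCast k).trans (hk ▸ hle)⟩
  · exact fun hadm _ => exists_abs_sub_dotProduct_le_of_forall_half_le hKc hadm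

/-- For a centrally symmetric convex body `K ⊆ ℝⁿ`, the lattice of translates `ℤⁿ + K`
is non-separable iff `ℤⁿ` is admissible for `(1/2)K°`. -/
theorem nonSeparable_iff_admissible_half_polar {n : ℕ} (K : Set (Fin n → ℝ))
    (hKc : IsCompact K) (hKconv : Convex ℝ K) (hKint : (interior K).Nonempty)
    (hsymm : K = -K) :
    NonSeparable (intLattice n) K ↔
      intLattice n ∩ interior ((2⁻¹ : ℝ) • polarBody K) = {0} :=
  nonSeparable_iff_admissible_half_polar_general K hKc
    ((balanced_iff_neg_mem hKconv).2 fun _ hy => by rwa [hsymm] at hy)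
end
end
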